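/- Let f be a positive continuous function on [0,∞) satisfying Condition A, let φ be a branching mechanism (with Lévy measure m) satisfying Grey's condition, let ψ be an immigration mechanism (with immigration measure ν), and let (Q^γ_t)_{t≥0} be the transition semigroup of the CBI-process with branching mechanism φ and immigration mechanism ψ. Let μ be a probability measure on [0,∞) with μ((0,∞)) > 0 (the law of the initial state Y_0). Then for every t > 0, the f-moment ∫_{[0,∞)} ∫_{[0,∞)} f(y) Q^γ_t(x,dy) μ(dx) is finite if and only if ∫_{(1,∞)} f(z) (m+ν)(dz) < ∞ and ∫_{[0,∞)} f(x) μ(dx) < ∞. -/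

import Mathlib

open MeasureTheory Set Filter

noncomputable section

/-- A positive continuous function on `[0,∞)` satisfying Condition A:
there exist `c ≥ 0` and `K > 0` such that `f` is convex on `[c,∞)`,
`f (x*y) ≤ K * f x * f y` for `x, y ∈ [c,∞)`, and `f` is bounded on `[0,c)`. -/
def ConditionA (f : ℝ → ℝ) : Prop :=
  ContinuousOn f (Set.Ici 0) ∧ (∀ x, 0 ≤ x → 0 < f x) ∧
  ∃ c, 0 ≤ c ∧ ∃ K, 0 < K ∧
    ConvexOn ℝ (Set.Ici c) f ∧
    (∀ x y, c ≤ x → c ≤ y → f (x * y) ≤ K * f x * f y) ∧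
    ∃ M, ∀ x, 0 ≤ x → x < c → f x ≤ M

/-- Condition B with constant `K`: `f` is convex and nondecreasing on `[0,∞)`,
submultiplicative up to the constant `K`, and `f > 1` on `[0,∞)`. -/
def ConditionB (f : ℝ → ℝ) (K : ℝ) : Prop :=
  0 < K ∧ ConvexOn ℝ (Set.Ici 0) f ∧ MonotoneOn f (Set.Ici 0) ∧
  (∀ x y, 0 ≤ x → 0 ≤ y → f (x * y) ≤ K * f x * f y) ∧
  (∀ x, 0 ≤ x → 1 < f x)

/-- `φ` is a branching mechanism with parameters `β ∈ ℝ`, `σ ≥ 0` and Lévy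
measure `m` (a σ-finite measure carried by `(0,∞)` with `∫ 1 ∧ z² m(dz) < ∞`):
`φ(λ) = βλ + σ²λ²/2 + ∫ (e^{-zλ} - 1 + zλ 1_{z ≤ 1}) m(dz)`. -/
structure IsBranchingMechanism (φ : ℝ → ℝ) (β σ : ℝ) (m : Measure ℝ) : Prop where
  sigma_nonneg : 0 ≤ σ
  sigmaFinite : SigmaFinite m
  carrier : m (Set.Iic 0) = 0
  levy_finite : ∫⁻ z, ENNReal.ofReal (min 1 (z ^ 2)) ∂m < ⊤
  form : ∀ l, 0 ≤ l →
    φ l = β * l + σ ^ 2 * l ^ 2 / 2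
      + ∫ z, (Real.exp (-(z * l)) - 1 + (if z ≤ 1 then z * l else 0)) ∂m

/-- Grey's condition: `∫_{0+} φ(λ)⁻¹ dλ = ∞`, i.e. `φ⁻¹` fails to be
integrable on every right neighbourhood of `0`. -/
def GreyCondition (φ : ℝ → ℝ) : Prop :=
  ∀ ε, 0 < ε → ¬ IntegrableOn (fun l => (φ l)⁻¹) (Set.Ioo 0 ε) volume

/-- `v t l` is the nonnegative solution of `v_t(λ) = λ - ∫_0^t φ(v_s(λ)) ds`. -/
def IsCumulant (φ : ℝ → ℝ) (v : ℝ → ℝ → ℝ) : Prop :=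
  ∀ l, 0 ≤ l → ∀ t, 0 ≤ t →
    0 ≤ v t l ∧ v t l = l - ∫ s in (0:ℝ)..t, φ (v s l)

/-- `(Q t)_{t ≥ 0}` is the transition semigroup of the CB-process with cumulant
`v`: each `Q t x` is a probability measure on `[0,∞)` with Laplace transform
`∫ e^{-λ y} Q_t(x, dy) = e^{-x v_t(λ)}`. -/
def IsCBSemigroup (v : ℝ → ℝ → ℝ) (Q : ℝ → ℝ → Measure ℝ) : Prop :=
  ∀ t x, 0 ≤ t → 0 ≤ x →
    IsProbabilityMeasure (Q t x) ∧ Q t x (Set.Iio 0) = 0 ∧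
    ∀ l, 0 ≤ l → ∫ y, Real.exp (-(l * y)) ∂(Q t x) = Real.exp (-(x * v t l))

/-- `ψ` is an immigration mechanism with drift `h ≥ 0` and immigration measure
`ν` (a σ-finite measure carried by `(0,∞)` with `∫ 1 ∧ z ν(dz) < ∞`):
`ψ(λ) = hλ + ∫ (1 - e^{-λz}) ν(dz)`. -/
structure IsImmigrationMechanism (ψ : ℝ → ℝ) (h : ℝ) (ν : Measure ℝ) : Prop where
  h_nonneg : 0 ≤ h
  sigmaFinite : SigmaFinite ν
  carrier : ν (Set.Iic 0) = 0
  levy_finite : ∫⁻ z, ENNReal.ofReal (min 1 z) ∂ν < ⊤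
  form : ∀ l, 0 ≤ l → ψ l = h * l + ∫ z, (1 - Real.exp (-(l * z))) ∂ν

/-- `(Q^γ t)_{t ≥ 0}` is the transition semigroup of the CBI-process with
cumulant `v` and immigration mechanism `ψ`: each `Qγ t x` is a probability
measure on `[0,∞)` with Laplace transform
`∫ e^{-λ y} Q^γ_t(x, dy) = exp(-x v_t(λ) - ∫_0^t ψ(v_s(λ)) ds)`. -/
def IsCBISemigroup (v : ℝ → ℝ → ℝ) (ψ : ℝ → ℝ) (Qγ : ℝ → ℝ → Measure ℝ) : Prop :=
  ∀ t x, 0 ≤ t → 0 ≤ x →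
    IsProbabilityMeasure (Qγ t x) ∧ Qγ t x (Set.Iio 0) = 0 ∧
    ∀ l, 0 ≤ l →
      ∫ y, Real.exp (-(l * y)) ∂(Qγ t x)
        = Real.exp (-(x * v t l) - ∫ s in (0:ℝ)..t, ψ (v s l))

/-!
A function satisfying Condition A is either bounded or comparable to a smooth convex doubling
weight `G`, so it suffices to treat such a `G`.

The truncations `y ↦ (1 - exp (-ε * y)) / ε` increase to the identity as `ε` decreases to `0`, and
`G` of a truncation is a function of `exp (-ε * y)`. Such functions satisfy the forward equation:
for polynomials it is the cumulant equation read off from the Laplace transform, and polynomial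
approximation extends it. If the Lévy measures have finite `G`-moment beyond `1`, the generator maps
the truncated weight to at most a constant multiple of itself, uniformly in `ε`, and Gronwall's
lemma followed by Fatou's lemma bounds the `G`-moment at time `t` by a multiple of `G x`.

Conversely, the generator applied to the truncated weight dominates the `G`-mass of the large
jumps, weighted by the current state for branching jumps. Integrating the forward equation over
`[0, t]`, where the process spends a positive expected time near positive states, shows that a
finite moment at time `t` forces the Lévy moments to be finite. Finally, `Y_t ≥ c * x` with
probability bounded below for large `x`, and doubling bounds `G x` by the `G`-moment started
from `x`.
-/

open Asymptotics
open scoped Topology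

/-! ### Weights -/

/-- A convex nondecreasing function on the line, at least `1`, doubling with constant `D` and
dominating `x / D` on `[0, ∞)`: the regularity extracted from Condition A. -/
structure IsConvexWeight (g : ℝ → ℝ) (D : ℝ) : Prop where
  convexOn : ConvexOn ℝ univ g
  monotone : Monotone g
  one_le : ∀ x, 1 ≤ g x
  doubling : ∀ x, 0 ≤ x → g (2 * x + 4) ≤ D * g x
  self_le : ∀ x, 0 ≤ x → x ≤ D * g x

/-- A `C²` convex nondecreasing function, at least `1`, whose growth on `[0, ∞)` is controlled by
the constant `D`: the test functions to which the generator is applied. -/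
structure IsSmoothWeight (G : ℝ → ℝ) (D : ℝ) : Prop where
  contDiff : ContDiff ℝ 2 G
  one_le : ∀ x, 1 ≤ G x
  deriv_nonneg : ∀ x, 0 ≤ deriv G x
  deriv2_nonneg : ∀ x, 0 ≤ deriv (deriv G) x
  deriv_le : ∀ x, 0 ≤ x → (1 + x) * deriv G x ≤ D * G x
  deriv2_le : ∀ x, 0 ≤ x → (1 + x) * deriv (deriv G) x ≤ D * G x
  doubling : ∀ x, 0 ≤ x → G (2 * x + 2) ≤ D * G x
  self_le : ∀ x, 0 ≤ x → x ≤ D * G x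

/-- The average of `g` over `[x, x + 1]`. -/
def unitAverage (g : ℝ → ℝ) (x : ℝ) : ℝ := ∫ r in x..x + 1, g r

section UnitAverage

variable {g : ℝ → ℝ}

lemma hasDerivAt_unitAverage (hg : Continuous g) (x : ℝ) :
    HasDerivAt (unitAverage g) (g (x + 1) - g x) x := by
  have hint (a b : ℝ) : IntervalIntegrable g volume a b := hg.intervalIntegrable a b
  have hprim (y : ℝ) : HasDerivAt (fun u ↦ ∫ r in (0 : ℝ)..u, g r) (g y) y :=
    hg.integral_hasStrictDerivAt 0 y |>.hasDerivAt
  have hsplit : unitAverage g = fun y ↦ (∫ r in (0 : ℝ)..y + 1, g r) - ∫ r in (0 : ℝ)..y, g r := by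
    funext y
    exact (intervalIntegral.integral_interval_sub_left (hint _ _) (hint _ _)).symm
  rw [hsplit]
  exact ((hprim (x + 1)).comp_add_const x 1).sub (hprim x)

lemma deriv_unitAverage (hg : Continuous g) :
    deriv (unitAverage g) = fun x ↦ g (x + 1) - g x :=
  funext fun x ↦ (hasDerivAt_unitAverage hg x).deriv

lemma contDiff_unitAverage {n : ℕ} (hg : ContDiff ℝ n g) :
    ContDiff ℝ (n + 1) (unitAverage g) := by
  refine contDiff_succ_iff_deriv.2
    ⟨fun x ↦ (hasDerivAt_unitAverage hg.continuous x).differentiableAt, by simp, ?_⟩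
  rw [deriv_unitAverage hg.continuous]
  fun_prop

lemma le_unitAverage (hg : Monotone g) (x : ℝ) : g x ≤ unitAverage g x := by
  simpa [unitAverage] using intervalIntegral.integral_mono_on (by simp : x ≤ x + 1)
    (μ := volume) intervalIntegrable_const hg.intervalIntegrable fun r hr ↦ hg hr.1

lemma unitAverage_le (hg : Monotone g) (x : ℝ) : unitAverage g x ≤ g (x + 1) := by
  simpa [unitAverage] using intervalIntegral.integral_mono_on (by simp : x ≤ x + 1)
    (μ := volume) hg.intervalIntegrable intervalIntegrable_const fun r hr ↦ hg hr.2

lemma monotone_unitAverage (hg : Continuous g) (hmono : Monotone g) : Monotone (unitAverage g) :=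
  monotone_of_hasDerivAt_nonneg (hasDerivAt_unitAverage hg)
    fun x ↦ sub_nonneg.2 (hmono (by linarith))

lemma unitAverage_add_one_sub_le (hg : Continuous g) {x B : ℝ}
    (hB : ∀ r ∈ Icc x (x + 1), g (r + 1) - g r ≤ B) :
    unitAverage g (x + 1) - unitAverage g x ≤ B := by
  have hint : IntervalIntegrable (fun r ↦ g (r + 1) - g r) volume x (x + 1) :=
    Continuous.intervalIntegrable (by fun_prop) _ _
  calc
    unitAverage g (x + 1) - unitAverage g x = ∫ r in x..x + 1, (g (r + 1) - g r) := by
      rw [intervalIntegral.integral_sub ((by fun_prop : Continuous fun r ↦ g (r + 1))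
        |>.intervalIntegrable _ _) (hg.intervalIntegrable _ _),
        intervalIntegral.integral_comp_add_right]
      rfl
    _ ≤ ∫ _ in x..x + 1, B :=
      intervalIntegral.integral_mono_on (by linarith) hint intervalIntegrable_const hB
    _ = B := by simp

end UnitAverage

lemma increment_mono_of_convexOn {g : ℝ → ℝ} (hg : ConvexOn ℝ univ g) {x y h : ℝ} (hxy : x ≤ y)
    (hh : 0 ≤ h) : g (x + h) - g x ≤ g (y + h) - g y := by
  rcases hxy.eq_or_lt with rfl | hlt
  · rfl
  have hn : 0 < y + h - x := by linarith
  have hleft := hg.2 (mem_univ x) (mem_univ (y + h)) (div_nonneg (sub_nonneg.2 hxy) hn.le)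
    (div_nonneg hh hn.le) (by field_simp; ring)
  have hright := hg.2 (mem_univ x) (mem_univ (y + h)) (div_nonneg hh hn.le)
    (div_nonneg (sub_nonneg.2 hxy) hn.le) (by field_simp; ring)
  simp only [smul_eq_mul] at hleft hright
  rw [show (y - x) / (y + h - x) * x + h / (y + h - x) * (y + h) = x + h by field_simp; ring]
    at hleft
  rw [show h / (y + h - x) * x + (y - x) / (y + h - x) * (y + h) = y by field_simp; ring]
    at hright
  have hsum : (y - x) / (y + h - x) + h / (y + h - x) = 1 := by field_simp; ring
  linear_combination hleft + hright + (g x + g (y + h)) * hsum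

namespace IsConvexWeight

variable {g : ℝ → ℝ} {D : ℝ} (hg : IsConvexWeight g D)

include hg

lemma continuous : Continuous g :=
  continuousOn_univ.1 (hg.convexOn.continuousOn isOpen_univ)

lemma constant_nonneg : 0 ≤ D := by
  nlinarith [hg.doubling 0 le_rfl, hg.one_le 0, hg.one_le (2 * 0 + 4)]

lemma add_two_mul_unit_increment_le {x : ℝ} (hx : 0 ≤ x) :
    (x + 2) * (g (x + 2) - g (x + 1)) ≤ D * g x := by
  have hslope := hg.convexOn.slope_mono_adjacent (mem_univ (x + 1)) (mem_univ (2 * x + 4))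
    (by linarith : x + 1 < x + 2) (by linarith)
  rw [show x + 2 - (x + 1) = 1 by ring, div_one,
    show 2 * x + 4 - (x + 2) = x + 2 by ring, le_div_iff₀ (by linarith)] at hslope
  linarith [hg.doubling x hx, hg.one_le (x + 2)]

lemma unitAverage_unitAverage_le {x : ℝ} (hx : 0 ≤ x) :
    unitAverage (unitAverage g) x ≤ D * g x := calc
  unitAverage (unitAverage g) x ≤ unitAverage g (x + 1) :=
    unitAverage_le (monotone_unitAverage hg.continuous hg.monotone) x
  _ ≤ g (x + 1 + 1) := unitAverage_le hg.monotone _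
  _ ≤ g (2 * x + 4) := hg.monotone (by linarith)
  _ ≤ D * g x := hg.doubling x hx

lemma le_unitAverage_unitAverage (x : ℝ) : g x ≤ unitAverage (unitAverage g) x :=
  (le_unitAverage hg.monotone x).trans
    (le_unitAverage (monotone_unitAverage hg.continuous hg.monotone) x)

lemma deriv_unitAverage_unitAverage :
    deriv (unitAverage (unitAverage g)) = fun x ↦ unitAverage g (x + 1) - unitAverage g x :=
  deriv_unitAverage (continuous_iff_continuousAt.2
    fun x ↦ (hasDerivAt_unitAverage hg.continuous x).continuousAt)

lemma deriv2_unitAverage_unitAverage :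
    deriv (deriv (unitAverage (unitAverage g))) =
      fun x ↦ (g (x + 2) - g (x + 1)) - (g (x + 1) - g x) := by
  funext x
  rw [hg.deriv_unitAverage_unitAverage]
  have h := ((hasDerivAt_unitAverage hg.continuous (x + 1)).comp_add_const x 1).sub
    (hasDerivAt_unitAverage hg.continuous x)
  rw [add_assoc, one_add_one_eq_two] at h
  exact h.deriv

lemma isSmoothWeight : IsSmoothWeight (unitAverage (unitAverage g)) D where
  contDiff := contDiff_unitAverage (n := 1)
    (contDiff_unitAverage (n := 0) (contDiff_zero.2 hg.continuous))
  one_le x := (hg.one_le x).trans (hg.le_unitAverage_unitAverage x)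
  deriv_nonneg x := by
    rw [hg.deriv_unitAverage_unitAverage]
    exact sub_nonneg.2 (monotone_unitAverage hg.continuous hg.monotone (by linarith))
  deriv2_nonneg x := by
    have h := increment_mono_of_convexOn hg.convexOn (by linarith : x ≤ x + 1) zero_le_one
    rw [hg.deriv2_unitAverage_unitAverage]
    rw [add_assoc, one_add_one_eq_two] at h
    exact sub_nonneg.2 h
  deriv_le x hx := by
    have hG : D * g x ≤ D * unitAverage (unitAverage g) x :=
      mul_le_mul_of_nonneg_left (hg.le_unitAverage_unitAverage x) hg.constant_nonneg
    have hincr : unitAverage g (x + 1) - unitAverage g x ≤ g (x + 2) - g (x + 1) := by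
      refine unitAverage_add_one_sub_le hg.continuous fun r hr ↦ ?_
      have h := increment_mono_of_convexOn hg.convexOn hr.2 zero_le_one
      rwa [add_assoc x, one_add_one_eq_two] at h
    rw [hg.deriv_unitAverage_unitAverage]
    nlinarith [hg.add_two_mul_unit_increment_le hx, hg.monotone (by linarith : x + 1 ≤ x + 2)]
  deriv2_le x hx := by
    have hG : D * g x ≤ D * unitAverage (unitAverage g) x :=
      mul_le_mul_of_nonneg_left (hg.le_unitAverage_unitAverage x) hg.constant_nonneg
    rw [hg.deriv2_unitAverage_unitAverage]
    nlinarith [hg.add_two_mul_unit_increment_le hx, hg.monotone (by linarith : x ≤ x + 1),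
      hg.monotone (by linarith : x + 1 ≤ x + 2)]
  doubling x hx := calc
    unitAverage (unitAverage g) (2 * x + 2) ≤ unitAverage g (2 * x + 2 + 1) :=
      unitAverage_le (monotone_unitAverage hg.continuous hg.monotone) _
    _ ≤ g (2 * x + 2 + 1 + 1) := unitAverage_le hg.monotone _
    _ ≤ D * g x := by
      convert hg.doubling x hx using 2
      ring
    _ ≤ D * unitAverage (unitAverage g) x :=
      mul_le_mul_of_nonneg_left (hg.le_unitAverage_unitAverage x) hg.constant_nonneg
  self_le x hx := (hg.self_le x hx).trans
    (mul_le_mul_of_nonneg_left (hg.le_unitAverage_unitAverage x) hg.constant_nonneg)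

end IsConvexWeight

lemma exists_linear_growth_of_convexOn_of_not_antitoneOn {f : ℝ → ℝ} {c : ℝ}
    (hf : ConvexOn ℝ (Ici c) f) (hanti : ¬ AntitoneOn f (Ici c)) :
    ∃ b, c ≤ b ∧ ∃ s, 0 < s ∧ ∀ x y, b ≤ x → x ≤ y → s * (y - x) ≤ f y - f x := by
  obtain ⟨p, hp, q, hq, hpq, hlt⟩ : ∃ p ∈ Ici c, ∃ q ∈ Ici c, p ≤ q ∧ f p < f q := by
    simpa [AntitoneOn] using hanti
  have hpq' : p < q := lt_of_le_of_ne hpq fun h ↦ hlt.ne (h ▸ rfl)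
  refine ⟨q, hq, (f q - f p) / (q - p), div_pos (by linarith) (by linarith), fun x y hx hxy ↦ ?_⟩
  rcases hxy.eq_or_lt with rfl | hxy
  · simp
  have hcx : x ∈ Ici c := hq.trans hx
  have hslope : (f q - f p) / (q - p) ≤ (f y - f x) / (y - x) := by
    rcases hx.eq_or_lt with rfl | hqx
    · exact hf.slope_mono_adjacent hp (hq.trans hxy.le) hpq' hxy
    · exact (hf.slope_mono_adjacent hp hcx hpq' hqx).trans
        (hf.slope_mono_adjacent hq (hcx.trans hxy.le) hqx hxy)
  rwa [le_div_iff₀ (by linarith)] at hslope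

/-- The convex weight `x ↦ f (x⁺ + a) / f a` obtained from `f` by shifting it into the range
`[a, ∞)` where it is increasing. -/
def shiftedWeight (f : ℝ → ℝ) (a x : ℝ) : ℝ := f (max x 0 + a) / f a

section ShiftedWeight

variable {f : ℝ → ℝ} {a : ℝ}

lemma convexOn_shiftedWeight (hf : ConvexOn ℝ (Ici a) f) (hmono : MonotoneOn f (Ici a))
    (ha : 0 < f a) : ConvexOn ℝ univ (shiftedWeight f a) := by
  have himage : (fun x : ℝ ↦ max x 0 + a) '' univ = Ici a := by
    ext y
    refine ⟨fun ⟨x, _, hx⟩ ↦ ?_, fun hy ↦ ⟨y - a, mem_univ _, ?_⟩⟩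
    · simp [← hx]
    · simp [mem_Ici.1 hy]
  have hinner : ConvexOn ℝ univ fun x : ℝ ↦ max x 0 + a :=
    ((convexOn_id convex_univ).sup (convexOn_const 0 convex_univ)).add_const a
  have h := (ConvexOn.comp (by rwa [himage]) hinner (by rwa [himage])).smul (inv_nonneg.2 ha.le)
  refine h.congr fun x _ ↦ ?_
  simp [shiftedWeight, div_eq_inv_mul]

lemma isConvexWeight_shiftedWeight {s d C : ℝ} (h1a : 1 ≤ a) (hs : 0 < s) (hd : 5 ≤ d)
    (hf : ConvexOn ℝ (Ici a) f) (hfa : 0 < f a)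
    (hgrowth : ∀ x y, a ≤ x → x ≤ y → s * (y - x) ≤ f y - f x)
    (hdil : ∀ x, a ≤ x → f (d * x) ≤ C * f x) :
    IsConvexWeight (shiftedWeight f a) (max C (f a / s)) := by
  have hmono : MonotoneOn f (Ici a) := fun x hx y _ hxy ↦ by
    nlinarith [hgrowth x y hx hxy]
  have hmem (x : ℝ) : a ≤ max x 0 + a := by simp
  have hpos (x : ℝ) : 0 < f (max x 0 + a) :=
    hfa.trans_le (hmono self_mem_Ici (hmem x) (hmem x))
  refine ⟨convexOn_shiftedWeight hf hmono hfa, fun x y hxy ↦ ?_, fun x ↦ ?_, fun x hx ↦ ?_,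
    fun x hx ↦ ?_⟩
  · exact div_le_div_of_nonneg_right (hmono (hmem x) (hmem y) (by gcongr)) hfa.le
  · rw [shiftedWeight, one_le_div hfa]
    exact hmono self_mem_Ici (hmem x) (hmem x)
  · calc
      shiftedWeight f a (2 * x + 4) ≤ f (d * (max x 0 + a)) / f a := by
        refine div_le_div_of_nonneg_right (hmono (hmem _) ?_ ?_) hfa.le
        · simp only [mem_Ici]; nlinarith [le_max_right x 0]
        · rw [max_eq_left hx, max_eq_left (by linarith)]; nlinarith
      _ ≤ C * f (max x 0 + a) / f a := div_le_div_of_nonneg_right (hdil _ (hmem x)) hfa.le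
      _ = C * shiftedWeight f a x := by rw [shiftedWeight, mul_div_assoc]
      _ ≤ max C (f a / s) * shiftedWeight f a x :=
        mul_le_mul_of_nonneg_right (le_max_left _ _) (div_pos (hpos x) hfa).le
  · calc
      x ≤ f (max x 0 + a) / s := by
        have h := hgrowth a (x + a) le_rfl (by linarith)
        rw [max_eq_left hx, le_div_iff₀ hs]
        linarith
      _ = f a / s * shiftedWeight f a x := by
        rw [shiftedWeight]
        field_simp
      _ ≤ max C (f a / s) * shiftedWeight f a x :=
        mul_le_mul_of_nonneg_right (le_max_right _ _) (div_pos (hpos x) hfa).le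

lemma isTheta_shiftedWeight {d C : ℝ} (h1a : 1 ≤ a) (hd : 5 ≤ d)
    (hcont : ContinuousOn f (Ici 0)) (hpos : ∀ x, 0 ≤ x → 0 < f x)
    (hmono : MonotoneOn f (Ici a)) (hdil : ∀ x, a ≤ x → f (d * x) ≤ C * f x) :
    f =Θ[𝓟 (Ici 0)] shiftedWeight f a := by
  have hfa : 0 < f a := hpos a (by linarith)
  have hgcont : ContinuousOn (shiftedWeight f a) (Ici 0) :=
    (hcont.comp (by fun_prop) fun x _ ↦ add_nonneg (le_max_right x 0) (by linarith)).div_const _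
  have hgpos (x : ℝ) : 0 < shiftedWeight f a x :=
    div_pos (hpos _ (add_nonneg (le_max_right x 0) (by linarith))) hfa
  have hcompact : f =Θ[𝓟 (Icc 0 a)] shiftedWeight f a :=
    ((hcont.mono Icc_subset_Ici_self).isTheta_principal (c := (1 : ℝ)) isCompact_Icc (by simp)
      fun x hx ↦ (hpos x hx.1).ne').trans
    ((hgcont.mono Icc_subset_Ici_self).isTheta_principal isCompact_Icc (by simp)
      fun x _ ↦ (hgpos x).ne').symm
  have hlarge : f =Θ[𝓟 (Ici a)] shiftedWeight f a := by
    refine ⟨isBigO_principal.2 ⟨f a, fun x hx ↦ ?_⟩,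
      isBigO_principal.2 ⟨C / f a, fun x hx ↦ ?_⟩⟩ <;>
      have h0x : 0 ≤ x := by linarith [mem_Ici.1 hx]
    all_goals
      rw [Real.norm_of_nonneg (hpos x h0x).le, Real.norm_of_nonneg (hgpos x).le, shiftedWeight,
        max_eq_left h0x]
    · rw [mul_div_cancel₀ _ hfa.ne']
      exact hmono hx (mem_Ici.2 (by linarith)) (by linarith)
    · rw [div_mul_eq_mul_div]
      refine div_le_div_of_nonneg_right ((hmono ?_ ?_ ?_).trans (hdil x hx)) hfa.le
      · exact mem_Ici.2 (by linarith)
      · exact mem_Ici.2 (by nlinarith [mem_Ici.1 hx])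
      · nlinarith [mem_Ici.1 hx]
  rw [← Icc_union_Ici_eq_Ici (by linarith : (0 : ℝ) ≤ a), ← sup_principal]
  exact hcompact.sup hlarge

end ShiftedWeight

lemma ConditionA.bounded_or_exists_isConvexWeight {f : ℝ → ℝ} (hf : ConditionA f) :
    (∃ M, ∀ x, 0 ≤ x → f x ≤ M) ∨
      ∃ g D, IsConvexWeight g D ∧ f =Θ[𝓟 (Ici 0)] g := by
  obtain ⟨hcont, hpos, c, _, K, _, hconv, hmul, M, hM⟩ := hf
  by_cases hanti : AntitoneOn f (Ici c)
  · refine .inl ⟨max M (f c), fun x hx ↦ ?_⟩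
    rcases lt_or_ge x c with hxc | hxc
    · exact le_max_of_le_left (hM x hx hxc)
    · exact le_max_of_le_right (hanti self_mem_Ici hxc hxc)
  obtain ⟨b, hcb, s, hs, hgrowth⟩ :=
    exists_linear_growth_of_convexOn_of_not_antitoneOn hconv hanti
  set a := max b 1
  have hba : b ≤ a := le_max_left _ _
  have h1a : 1 ≤ a := le_max_right _ _
  have hd : (5 : ℝ) ≤ max c 5 := le_max_right _ _
  have hgrowth' x y (hx : a ≤ x) := hgrowth x y (hba.trans hx)
  have hdil x (hx : a ≤ x) : f (max c 5 * x) ≤ K * f (max c 5) * f x :=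
    hmul _ _ (le_max_left _ _) (hcb.trans (hba.trans hx))
  refine .inr ⟨shiftedWeight f a, _, isConvexWeight_shiftedWeight h1a hs hd
    (hconv.subset (Ici_subset_Ici.2 (hcb.trans hba)) (convex_Ici a))
    (hpos a (by linarith)) hgrowth' hdil,
    isTheta_shiftedWeight h1a hd hcont hpos (fun x hx y _ hxy ↦ ?_) hdil⟩
  nlinarith [hgrowth' x y hx hxy]

lemma ConditionA.isBigO_one_or_exists_isSmoothWeight {f : ℝ → ℝ} (hf : ConditionA f) :
    f =O[𝓟 (Ici 0)] (fun _ ↦ (1 : ℝ)) ∨ ∃ G D, IsSmoothWeight G D ∧ f =Θ[𝓟 (Ici 0)] G := by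
  rcases hf.bounded_or_exists_isConvexWeight with ⟨M, hM⟩ | ⟨g, D, hg, hfg⟩
  · refine .inl (isBigO_principal.2 ⟨M, fun x hx ↦ ?_⟩)
    simpa [abs_of_pos (hf.2.1 x hx)] using hM x hx
  have hG := hg.isSmoothWeight
  refine .inr ⟨_, D, hG, hfg.trans
    ⟨isBigO_principal.2 ⟨1, fun x _ ↦ ?_⟩, isBigO_principal.2 ⟨D, fun x hx ↦ ?_⟩⟩⟩ <;>
    rw [Real.norm_of_nonneg (zero_le_one.trans (hg.one_le x)),
      Real.norm_of_nonneg (zero_le_one.trans (hG.one_le x))]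
  · rw [one_mul]
    exact hg.le_unitAverage_unitAverage x
  · exact hg.unitAverage_unitAverage_le hx

/-! ### Branching and immigration mechanisms -/

lemma exp_neg_sub_one_add_le_sq {s : ℝ} (hs : 0 ≤ s) : Real.exp (-s) - 1 + s ≤ s ^ 2 / 2 := by
  have hquad := Real.quadratic_le_exp_of_nonneg hs
  have hprod : (1 : ℝ) ≤ (1 - s + s ^ 2 / 2) * Real.exp s := by
    nlinarith [sq_nonneg (s ^ 2), sq_nonneg (s - 1)]
  have hinv : Real.exp (-s) * Real.exp s = 1 := by rw [← Real.exp_add]; simp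
  have := le_of_mul_le_mul_right (hinv.trans_le hprod) (Real.exp_pos s)
  linarith

lemma one_sub_exp_neg_mem_Icc {s : ℝ} (hs : 0 ≤ s) : 1 - Real.exp (-s) ∈ Icc 0 (min 1 s) :=
  ⟨sub_nonneg.2 (Real.exp_le_one_iff.2 (by linarith)),
    le_min (by linarith [Real.exp_pos (-s)]) (by linarith [Real.one_sub_le_exp_neg s])⟩

lemma ae_pos_of_measure_Iic {q : Measure ℝ} (h : q (Iic 0) = 0) : ∀ᵐ z ∂q, 0 < z := by
  simpa [ae_iff, Iic] using h

lemma ae_nonneg_of_measure_Iio {q : Measure ℝ} (h : q (Iio 0) = 0) : ∀ᵐ z ∂q, 0 ≤ z := by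
  simpa [ae_iff, Iio] using h

/-- The integrand `e^{-zl} - 1 + z l 1_{z ≤ 1}` of the Lévy–Khintchine formula. -/
def compensatedExp (z l : ℝ) : ℝ := Real.exp (-(z * l)) - 1 + if z ≤ 1 then z * l else 0

lemma measurable_compensatedExp (l : ℝ) : Measurable fun z ↦ compensatedExp z l := by
  unfold compensatedExp
  exact (by fun_prop : Measurable fun z : ℝ ↦ Real.exp (-(z * l)) - 1).add
    (Measurable.ite measurableSet_Iic (by fun_prop) (by fun_prop))

lemma continuous_compensatedExp (z : ℝ) : Continuous (compensatedExp z) := by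
  unfold compensatedExp
  split_ifs <;> fun_prop

lemma convexOn_compensatedExp (z : ℝ) : ConvexOn ℝ univ (compensatedExp z) := by
  have hexp : ConvexOn ℝ univ fun l ↦ Real.exp (-(z * l)) := by
    simpa [Function.comp_def] using convexOn_exp.comp_linearMap (LinearMap.mulLeft ℝ (-z))
  have hlin : ConvexOn ℝ univ fun l ↦ if z ≤ 1 then z * l else 0 := by
    split_ifs
    · exact (LinearMap.mulLeft ℝ z).convexOn convex_univ
    · exact convexOn_const 0 convex_univ
  exact (hexp.sub (concaveOn_const 1 convex_univ)).add hlin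

lemma abs_compensatedExp_le {z l : ℝ} (hz : 0 < z) (hl : 0 ≤ l) :
    |compensatedExp z l| ≤ (1 + l ^ 2) * min 1 (z ^ 2) := by
  have hzl : 0 ≤ z * l := by positivity
  unfold compensatedExp
  split_ifs with h
  · rw [abs_of_nonneg (by linarith [Real.one_sub_le_exp_neg (z * l)]), min_eq_right (by nlinarith)]
    nlinarith [exp_neg_sub_one_add_le_sq hzl, sq_nonneg (z * l), sq_nonneg z]
  · have hexp := one_sub_exp_neg_mem_Icc hzl
    rw [min_eq_left (by nlinarith), add_zero, abs_sub_comm, abs_of_nonneg hexp.1]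
    nlinarith [hexp.2.trans (min_le_left _ _), sq_nonneg l]

lemma convexOn_integral {α : Type*} [MeasurableSpace α] {q : Measure α} {F : α → ℝ → ℝ} {s : Set ℝ}
    (hs : Convex ℝ s) (hF : ∀ z, ConvexOn ℝ s (F z)) (hint : ∀ l ∈ s, Integrable (F · l) q) :
    ConvexOn ℝ s fun l ↦ ∫ z, F z l ∂q := by
  refine ⟨hs, fun x hx y hy a b ha hb hab ↦ ?_⟩
  simp only [smul_eq_mul]
  rw [← integral_const_mul, ← integral_const_mul,
    ← integral_add ((hint x hx).const_mul a) ((hint y hy).const_mul b)]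
  exact integral_mono (hint _ (hs hx hy ha hb hab))
    (((hint x hx).const_mul a).add ((hint y hy).const_mul b))
    fun z ↦ (hF z).2 hx hy ha hb hab

namespace IsBranchingMechanism

variable {φ : ℝ → ℝ} {β σ : ℝ} {m : Measure ℝ} (hφ : IsBranchingMechanism φ β σ m)

include hφ

lemma ae_pos : ∀ᵐ z ∂m, 0 < z := ae_pos_of_measure_Iic hφ.carrier

lemma integrable_min_one_sq : Integrable (fun z : ℝ ↦ min 1 (z ^ 2)) m := by
  refine ⟨by fun_prop, ?_⟩
  rw [hasFiniteIntegral_iff_ofReal (ae_of_all _ fun z ↦ by positivity)]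
  exact hφ.levy_finite

lemma measure_Ioi_one_lt_top : m (Ioi 1) < ⊤ := by
  have hsub : Ioi 1 ⊆ {z : ℝ | 1 ≤ min 1 (z ^ 2)} :=
    fun z (hz : 1 < z) ↦ le_min le_rfl (one_le_pow₀ hz.le)
  exact (measure_mono hsub).trans_lt (hφ.integrable_min_one_sq.measure_ge_lt_top one_pos)

lemma integrable_compensatedExp {l : ℝ} (hl : 0 ≤ l) :
    Integrable (fun z ↦ compensatedExp z l) m := by
  refine (hφ.integrable_min_one_sq.const_mul (1 + l ^ 2)).mono'
    (measurable_compensatedExp l).aestronglyMeasurable ?_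
  filter_upwards [hφ.ae_pos] with z hz
  exact abs_compensatedExp_le hz hl

lemma eqOn : EqOn φ (fun l ↦ β * l + σ ^ 2 * l ^ 2 / 2 + ∫ z, compensatedExp z l ∂m) (Ici 0) :=
  hφ.form

lemma map_zero : φ 0 = 0 := by
  simp [hφ.form 0 le_rfl]

lemma convexOn : ConvexOn ℝ (Ici 0) φ := by
  refine ConvexOn.congr (ConvexOn.add (ConvexOn.add ?_ ?_) ?_) hφ.eqOn.symm
  · exact (LinearMap.mulLeft ℝ β).convexOn (convex_Ici 0)
  · have h := (convexOn_pow (𝕜 := ℝ) 2).smul (by positivity : 0 ≤ σ ^ 2 / 2)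
    exact h.congr fun x _ ↦ by simp only [smul_eq_mul]; ring
  · exact convexOn_integral (convex_Ici 0)
      (fun z ↦ (convexOn_compensatedExp z).subset (subset_univ _) (convex_Ici 0))
      fun l hl ↦ hφ.integrable_compensatedExp hl

lemma continuousOn : ContinuousOn φ (Ici 0) := by
  refine ContinuousOn.congr (ContinuousOn.add (by fun_prop) fun x _ ↦ ?_) hφ.eqOn
  refine continuousWithinAt_of_dominated (bound := fun z ↦ (1 + (x + 1) ^ 2) * min 1 (z ^ 2))
    (.of_forall fun l ↦ (measurable_compensatedExp l).aestronglyMeasurable) ?_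
    (hφ.integrable_min_one_sq.const_mul _)
    (ae_of_all _ fun z ↦ (continuous_compensatedExp z).continuousWithinAt)
  filter_upwards [mem_nhdsWithin_of_mem_nhds (Iio_mem_nhds (lt_add_one x)), self_mem_nhdsWithin]
    with l hlx (hl : 0 ≤ l)
  filter_upwards [hφ.ae_pos] with z hz
  refine (abs_compensatedExp_le hz hl).trans ?_
  gcongr
  exact le_of_lt hlx

end IsBranchingMechanism

namespace IsImmigrationMechanism

variable {ψ : ℝ → ℝ} {h : ℝ} {ν : Measure ℝ} (hψ : IsImmigrationMechanism ψ h ν)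

include hψ

lemma ae_pos : ∀ᵐ z ∂ν, 0 < z := ae_pos_of_measure_Iic hψ.carrier

lemma integrable_min_one : Integrable (fun z : ℝ ↦ min 1 z) ν := by
  refine ⟨by fun_prop, ?_⟩
  rw [hasFiniteIntegral_iff_ofReal]
  · exact hψ.levy_finite
  · filter_upwards [hψ.ae_pos] with z hz
    exact le_min zero_le_one hz.le

lemma measure_Ioi_one_lt_top : ν (Ioi 1) < ⊤ := by
  have hsub : Ioi 1 ⊆ {z : ℝ | 1 ≤ min 1 z} := fun z (hz : 1 < z) ↦ le_min le_rfl hz.le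
  exact (measure_mono hsub).trans_lt (hψ.integrable_min_one.measure_ge_lt_top one_pos)

lemma continuousOn : ContinuousOn ψ (Ici 0) := by
  refine ContinuousOn.congr (f := fun l ↦ h * l + ∫ z, (1 - Real.exp (-(l * z))) ∂ν)
    (ContinuousOn.add (by fun_prop) fun x hx ↦ ?_) hψ.form
  refine continuousWithinAt_of_dominated (bound := fun z ↦ (x + 2) * min 1 z)
    (.of_forall fun l ↦ by fun_prop) ?_ (hψ.integrable_min_one.const_mul _)
    (ae_of_all _ fun z ↦ by fun_prop)
  filter_upwards [mem_nhdsWithin_of_mem_nhds (Iio_mem_nhds (lt_add_one x)), self_mem_nhdsWithin]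
    with l hlx (hl : 0 ≤ l)
  filter_upwards [hψ.ae_pos] with z hz
  have hexp := one_sub_exp_neg_mem_Icc (mul_nonneg hl hz.le)
  rw [Real.norm_of_nonneg hexp.1]
  refine hexp.2.trans ?_
  rcases le_total 1 z with h1 | h1
  · rw [min_eq_left h1]; linarith [min_le_left 1 (l * z), mem_Ici.1 hx]
  · rw [min_eq_right h1]; nlinarith [min_le_right 1 (l * z), mem_Iio.1 hlx]

end IsImmigrationMechanism

/-! ### The cumulant equation -/

lemma le_mul_exp_of_deriv_right_le {V V' : ℝ → ℝ} {a b K : ℝ} (hab : a ≤ b)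
    (hV : ContinuousOn V (Icc a b)) (hV' : ∀ x ∈ Ico a b, HasDerivWithinAt V (V' x) (Ici x) x)
    (hle : ∀ x ∈ Ico a b, V' x ≤ K * V x) : V b ≤ V a * Real.exp (K * (b - a)) := by
  have h := le_gronwallBound_of_liminf_deriv_right_le (ε := 0) hV
    (fun x hx _ hr ↦ (hV' x hx).liminf_right_slope_le hr) le_rfl (by simpa using hle) b
    (right_mem_Icc.2 hab)
  rwa [gronwallBound_ε0] at h

lemma hasDerivWithinAt_integral_of_continuousOn {g : ℝ → ℝ} {a t T : ℝ}
    (hg : ContinuousOn g (Icc a T)) (ht : t ∈ Ico a T) :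
    HasDerivWithinAt (fun u ↦ ∫ s in a..u, g s) (g t) (Ici t) t := by
  have hmem : Icc a T ∈ 𝓝[>] t :=
    mem_of_superset (Icc_mem_nhdsGT ht.2) (Icc_subset_Icc_left ht.1)
  exact intervalIntegral.integral_hasDerivWithinAt_right (t := Ioi t)
    ((hg.mono (Icc_subset_Icc_right ht.2.le)).intervalIntegrable_of_Icc ht.1)
    ⟨Icc a T, hmem, hg.aestronglyMeasurable measurableSet_Icc⟩
    ((hg t ⟨ht.1, ht.2.le⟩).mono_of_mem_nhdsWithin hmem)

lemma continuousOn_integral_of_continuousOn {g : ℝ → ℝ} {a : ℝ} (hg : ContinuousOn g (Ici a)) :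
    ContinuousOn (fun u ↦ ∫ s in a..u, g s) (Ici a) := fun t ht ↦ by
  have ht' : a ≤ t + 1 := (mem_Ici.1 ht).trans (le_add_of_nonneg_right zero_le_one)
  have h := intervalIntegral.continuousOn_primitive_interval ((intervalIntegrable_iff' (by simp)).1
    ((hg.mono Icc_subset_Ici_self).intervalIntegrable_of_Icc (μ := volume) ht'))
  rw [uIcc_of_le ht'] at h
  exact (h t ⟨ht, (lt_add_one t).le⟩).mono_of_mem_nhdsWithin
    (inter_mem self_mem_nhdsWithin (mem_nhdsWithin_of_mem_nhds (Iic_mem_nhds (lt_add_one t))))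

section ConvexGrowth

variable {φ : ℝ → ℝ} (hφ : ConvexOn ℝ (Ici 0) φ) (h0 : φ 0 = 0)

include hφ h0

lemma map_mul_le_of_convexOn {θ x : ℝ} (hθ : θ ∈ Icc 0 1) (hx : 0 ≤ x) : φ (θ * x) ≤ θ * φ x := by
  simpa [h0] using hφ.2 hx self_mem_Ici hθ.1 (sub_nonneg.2 hθ.2) (add_sub_cancel _ _)

lemma div_mul_sub_le_of_convexOn {a x y : ℝ} (ha : 0 < a) (hax : a ≤ x) (hxy : x ≤ y) :
    φ a / a * (y - x) ≤ φ y - φ x := by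
  have hx : 0 < x := ha.trans_le hax
  have hax' : φ a / a ≤ φ x / x := by
    have h := map_mul_le_of_convexOn hφ h0 ⟨by positivity, (div_le_one hx).2 hax⟩ hx.le
    rw [div_mul_cancel₀ _ hx.ne'] at h
    rw [div_le_iff₀ ha]
    exact h.trans_eq (by ring)
  rcases hxy.eq_or_lt with rfl | hlt
  · simp
  have hslope := hφ.slope_mono_adjacent self_mem_Ici (hx.le.trans hxy) hx hlt
  rw [h0, sub_zero, sub_zero] at hslope
  rw [← le_div_iff₀ (by linarith)]
  exact hax'.trans hslope

lemma exists_neg_affine_le_of_convexOn (hcont : ContinuousOn φ (Ici 0)) :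
    ∃ A, 0 ≤ A ∧ ∀ x, 0 ≤ x → -(A * (x + 1)) ≤ φ x := by
  obtain ⟨A, hA⟩ := isCompact_Icc.exists_bound_of_continuousOn
    (hcont.mono (Icc_subset_Ici_self : Icc 0 1 ⊆ Ici (0 : ℝ)))
  have hA0 : 0 ≤ A := (norm_nonneg _).trans (hA 0 (by simp))
  refine ⟨A, hA0, fun x hx ↦ ?_⟩
  rcases le_total x 1 with h1 | h1
  · nlinarith [(abs_le.1 (hA x ⟨hx, h1⟩)).1]
  · have h := div_mul_sub_le_of_convexOn hφ h0 one_pos le_rfl h1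
    nlinarith [(abs_le.1 (hA 1 (by simp))).1]

end ConvexGrowth

/-- `w` is a nonnegative solution of `w t = l - ∫₀ᵗ φ (w s) ds`. Integrability of `φ ∘ w` is not
part of the definition: where it fails the integral is `0` and the equation reads `w t = l`. -/
structure IsCumulantPath (φ w : ℝ → ℝ) (l : ℝ) : Prop where
  nonneg : ∀ t, 0 ≤ t → 0 ≤ w t
  eq_sub_integral : ∀ t, 0 ≤ t → w t = l - ∫ s in (0 : ℝ)..t, φ (w s)

lemma IsCumulant.isCumulantPath {φ : ℝ → ℝ} {v : ℝ → ℝ → ℝ} (hv : IsCumulant φ v) {l : ℝ}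
    (hl : 0 ≤ l) : IsCumulantPath φ (v · l) l :=
  ⟨fun t ht ↦ (hv l hl t ht).1, fun t ht ↦ (hv l hl t ht).2⟩

namespace IsCumulantPath

variable {φ w : ℝ → ℝ} {l : ℝ}

section Local

variable (hw : IsCumulantPath φ w l)

include hw

lemma map_zero : w 0 = l := by
  simpa using hw.eq_sub_integral 0 le_rfl

lemma continuousOn_Icc {T : ℝ} (hT : 0 ≤ T)
    (hint : IntervalIntegrable (fun s ↦ φ (w s)) volume 0 T) : ContinuousOn w (Icc 0 T) := by
  have h := intervalIntegral.continuousOn_primitive_interval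
    ((intervalIntegrable_iff' (by simp)).1 hint)
  rw [uIcc_of_le hT] at h
  exact (continuousOn_const.sub h).congr fun t ht ↦ hw.eq_sub_integral t ht.1

variable (hφc : ContinuousOn φ (Ici 0))

include hφc

lemma hasDerivWithinAt_of_intervalIntegrable {t T : ℝ}
    (hint : IntervalIntegrable (fun s ↦ φ (w s)) volume 0 T) (ht : t ∈ Ico 0 T) :
    HasDerivWithinAt w (-φ (w t)) (Ici t) t := by
  have hcont : ContinuousOn (fun s ↦ φ (w s)) (Icc 0 T) :=
    hφc.comp (hw.continuousOn_Icc (ht.1.trans ht.2.le) hint) fun s hs ↦ hw.nonneg s hs.1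
  exact ((hasDerivWithinAt_integral_of_continuousOn hcont ht).const_sub l).congr
    (fun u hu ↦ hw.eq_sub_integral u (ht.1.trans hu)) (hw.eq_sub_integral t ht.1)

lemma add_one_le_mul_exp {A t : ℝ} (hA : 0 ≤ A) (hφA : ∀ x, 0 ≤ x → -(A * (x + 1)) ≤ φ x)
    (ht : 0 ≤ t) : w t + 1 ≤ (l + 1) * Real.exp (A * t) := by
  by_cases hint : IntervalIntegrable (fun s ↦ φ (w s)) volume 0 t
  · have h := le_mul_exp_of_deriv_right_le (V := fun s ↦ w s + 1) (V' := fun s ↦ -φ (w s)) (K := A)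
      ht ((hw.continuousOn_Icc ht hint).add continuousOn_const)
      (fun s hs ↦ (hw.hasDerivWithinAt_of_intervalIntegrable hφc hint hs).add_const 1)
      (fun s hs ↦ by linarith [hφA _ (hw.nonneg s hs.1)])
    rwa [hw.map_zero, sub_zero] at h
  · have hl : 0 ≤ l := hw.map_zero ▸ hw.nonneg 0 le_rfl
    rw [hw.eq_sub_integral t ht, intervalIntegral.integral_undef hint, sub_zero]
    exact le_mul_of_one_le_right (by linarith) (Real.one_le_exp (by positivity))

-- Where `φ ∘ w` fails to be integrable, `w` is constant.
lemma aestronglyMeasurable_comp :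
    AEStronglyMeasurable (fun s ↦ φ (w s)) (volume.restrict (Ici 0)) := by
  set S := {t | 0 ≤ t ∧ IntervalIntegrable (fun s ↦ φ (w s)) volume 0 t}
  have hdown {t u : ℝ} (hu : u ∈ S) (ht : t ∈ Icc 0 u) : t ∈ S :=
    ⟨ht.1, hu.2.mono_set
      (by simpa only [uIcc_of_le ht.1, uIcc_of_le hu.1] using Icc_subset_Icc_right ht.2)⟩
  have hmeas : MeasurableSet S :=
    (ordConnected_iff.2 fun t ht _ hu _ _ hr ↦ hdown hu ⟨ht.1.trans hr.1, hr.2⟩).measurableSet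
  have hcont : ContinuousOn w S := fun t ht ↦ by
    by_cases hmax : ∃ u ∈ S, t < u
    · obtain ⟨u, hu, htu⟩ := hmax
      refine (hw.continuousOn_Icc hu.1 hu.2 t ⟨ht.1, htu.le⟩).mono_of_mem_nhdsWithin ?_
      filter_upwards [self_mem_nhdsWithin, mem_nhdsWithin_of_mem_nhds (Iic_mem_nhds htu)]
        with r hr hru using ⟨hr.1, hru⟩
    · push Not at hmax
      exact (hw.continuousOn_Icc ht.1 ht.2 t ⟨ht.1, le_rfl⟩).mono fun u hu ↦ ⟨hu.1, hmax u hu⟩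
  have hin : AEStronglyMeasurable (fun s ↦ φ (w s)) (volume.restrict S) :=
    (hφc.comp hcont fun t ht ↦ hw.nonneg t ht.1).aestronglyMeasurable hmeas
  have hout : AEStronglyMeasurable (fun s ↦ φ (w s)) (volume.restrict (Ici 0 \ S)) := by
    refine aestronglyMeasurable_const.congr (f := fun _ ↦ φ l)
      ((ae_restrict_iff' (measurableSet_Ici.diff hmeas)).2 (.of_forall fun t ht ↦ ?_))
    have hnot : ¬ IntervalIntegrable (fun s ↦ φ (w s)) volume 0 t := fun h ↦ ht.2 ⟨ht.1, h⟩
    dsimp only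
    rw [hw.eq_sub_integral t ht.1, intervalIntegral.integral_undef hnot, sub_zero]
  have hunion : S ∪ Ici 0 \ S = Ici 0 := union_sdiff_cancel fun t ht ↦ ht.1
  rw [← hunion]
  exact aestronglyMeasurable_union_iff.2 ⟨hin, hout⟩

end Local

variable (hφ : ConvexOn ℝ (Ici 0) φ) (hφc : ContinuousOn φ (Ici 0)) (h0 : φ 0 = 0)
  (hw : IsCumulantPath φ w l)

include hφ hφc h0 hw

lemma exists_le (T : ℝ) : ∃ B, ∀ t ∈ Icc 0 T, w t ≤ B := by
  obtain ⟨A, hA, hφA⟩ := exists_neg_affine_le_of_convexOn hφ h0 hφc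
  have hl : 0 ≤ l := hw.map_zero ▸ hw.nonneg 0 le_rfl
  refine ⟨(l + 1) * Real.exp (A * T), fun t ht ↦ ?_⟩
  have h := hw.add_one_le_mul_exp hφc hA hφA ht.1
  have hexp : (l + 1) * Real.exp (A * t) ≤ (l + 1) * Real.exp (A * T) := by
    gcongr
    exact ht.2
  linarith

lemma intervalIntegrable {T : ℝ} (hT : 0 ≤ T) :
    IntervalIntegrable (fun s ↦ φ (w s)) volume 0 T := by
  obtain ⟨B, hB⟩ := hw.exists_le hφ hφc h0 T
  obtain ⟨C, hC⟩ := isCompact_Icc.exists_bound_of_continuousOn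
    (hφc.mono (Icc_subset_Ici_self : Icc 0 B ⊆ Ici (0 : ℝ)))
  rw [intervalIntegrable_iff_integrableOn_Ioc_of_le hT]
  refine Integrable.of_bound ?_ C ((ae_restrict_iff' measurableSet_Ioc).2 (.of_forall fun s hs ↦
    hC _ ⟨hw.nonneg s hs.1.le, hB s (Ioc_subset_Icc_self hs)⟩))
  exact (hw.aestronglyMeasurable_comp hφc).mono_measure
    (Measure.restrict_mono (fun s hs ↦ hs.1.le) le_rfl)

lemma continuousOn : ContinuousOn w (Ici 0) := fun t ht ↦
  ((hw.continuousOn_Icc (by linarith [mem_Ici.1 ht])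
    (hw.intervalIntegrable hφ hφc h0 (by linarith [mem_Ici.1 ht])) t
      ⟨ht, (lt_add_one t).le⟩).mono_of_mem_nhdsWithin
    (inter_mem self_mem_nhdsWithin (mem_nhdsWithin_of_mem_nhds (Iic_mem_nhds (lt_add_one t)))))

lemma hasDerivWithinAt {t : ℝ} (ht : 0 ≤ t) : HasDerivWithinAt w (-φ (w t)) (Ici t) t :=
  hw.hasDerivWithinAt_of_intervalIntegrable hφc
    (hw.intervalIntegrable hφ hφc h0 (by linarith : 0 ≤ t + 1)) ⟨ht, lt_add_one t⟩

lemma pos (hl : 0 < l) {t : ℝ} (ht : 0 ≤ t) : 0 < w t := by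
  obtain ⟨B, hB⟩ := hw.exists_le hφ hφc h0 t
  have hB0 : 0 < B := (hl.trans_eq hw.map_zero.symm).trans_le (hB 0 ⟨le_rfl, ht⟩)
  have h := le_mul_exp_of_deriv_right_le (V := fun s ↦ -w s) (V' := fun s ↦ -(-φ (w s)))
    (K := -(φ B / B)) ht
    ((hw.continuousOn hφ hφc h0).mono Icc_subset_Ici_self).neg
    (fun s hs ↦ (hw.hasDerivWithinAt hφ hφc h0 hs.1).neg) (fun s hs ↦ ?_)
  · rw [hw.map_zero] at h
    have : 0 < l * Real.exp (-(φ B / B) * (t - 0)) := by positivity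
    linarith
  · have hws := hB s ⟨hs.1, hs.2.le⟩
    have h := map_mul_le_of_convexOn hφ h0
      ⟨div_nonneg (hw.nonneg s hs.1) hB0.le, (div_le_one hB0).2 hws⟩ hB0.le
    rw [div_mul_cancel₀ _ hB0.ne'] at h
    linear_combination h

lemma shift {s : ℝ} (hs : 0 ≤ s) : IsCumulantPath φ (fun t ↦ w (t + s)) (w s) := by
  refine ⟨fun t ht ↦ hw.nonneg _ (add_nonneg ht hs), fun t ht ↦ ?_⟩
  have hint {T : ℝ} (hT : 0 ≤ T) := hw.intervalIntegrable hφ hφc h0 hT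
  rw [intervalIntegral.integral_comp_add_right (fun r ↦ φ (w r)), zero_add,
    hw.eq_sub_integral _ (add_nonneg ht hs), hw.eq_sub_integral s hs, sub_sub,
    intervalIntegral.integral_add_adjacent_intervals (hint hs)
      ((hint hs).symm.trans (hint (add_nonneg ht hs)))]

lemma exists_pos_le (hl : 0 < l) {T : ℝ} (hT : 0 ≤ T) : ∃ a, 0 < a ∧ ∀ t ∈ Icc 0 T, a ≤ w t := by
  obtain ⟨r, hr, hmin⟩ := isCompact_Icc.exists_isMinOn (nonempty_Icc.2 hT)
    ((hw.continuousOn hφ hφc h0).mono Icc_subset_Ici_self)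
  exact ⟨w r, hw.pos hφ hφc h0 hl hr.1, fun t ht ↦ hmin ht⟩

-- Convexity makes `φ` one-sided Lipschitz away from `0`, so the squared distance of two solutions
-- grows at most exponentially.
lemma unique {w' : ℝ → ℝ} (hw' : IsCumulantPath φ w' l) (hl : 0 < l) {t : ℝ} (ht : 0 ≤ t) :
    w t = w' t := by
  obtain ⟨a, ha, haw⟩ := hw.exists_pos_le hφ hφc h0 hl ht
  obtain ⟨a', ha', haw'⟩ := hw'.exists_pos_le hφ hφc h0 hl ht
  set b := min a a'
  have hb0 : 0 < b := lt_min ha ha'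
  have hdissip {x y : ℝ} (hx : b ≤ x) (hy : b ≤ y) :
      φ b / b * (y - x) ^ 2 ≤ (y - x) * (φ y - φ x) := by
    rcases le_total x y with hxy | hxy
    · nlinarith [div_mul_sub_le_of_convexOn hφ h0 hb0 hx hxy]
    · nlinarith [div_mul_sub_le_of_convexOn hφ h0 hb0 hy hxy]
  have hderiv (s : ℝ) (hs : s ∈ Ico 0 t) :=
    ((hw.hasDerivWithinAt hφ hφc h0 hs.1).sub (hw'.hasDerivWithinAt hφ hφc h0 hs.1)).pow 2
  have h := le_mul_exp_of_deriv_right_le (K := -(2 * (φ b / b))) ht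
    ((((hw.continuousOn hφ hφc h0).sub (hw'.continuousOn hφ hφc h0)).pow 2).mono
      Icc_subset_Ici_self) hderiv fun s hs ↦ ?_
  · rw [Pi.pow_apply, Pi.pow_apply, Pi.sub_apply, Pi.sub_apply, hw.map_zero, hw'.map_zero] at h
    nlinarith
  · have hs' : s ∈ Icc 0 t := Ico_subset_Icc_self hs
    have h := hdissip ((min_le_right a a').trans (haw' s hs'))
      ((min_le_left a a').trans (haw s hs'))
    simp only [Pi.sub_apply, Pi.pow_apply]
    linear_combination 2 * h

end IsCumulantPath

lemma IsCumulant.flow {φ : ℝ → ℝ} {v : ℝ → ℝ → ℝ} (hv : IsCumulant φ v)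
    (hφ : ConvexOn ℝ (Ici 0) φ) (hφc : ContinuousOn φ (Ici 0)) (h0 : φ 0 = 0)
    {l s t : ℝ} (hl : 0 < l) (hs : 0 ≤ s) (ht : 0 ≤ t) : v (t + s) l = v t (v s l) := by
  have hpath := hv.isCumulantPath hl.le
  have hpos := hpath.pos hφ hφc h0 hl hs
  exact (hpath.shift hφ hφc h0 hs).unique hφ hφc h0 (hv.isCumulantPath hpos.le) hpos ht

/-! ### Laplace transforms and the forward equation -/

lemma exp_neg_mul_le_one {a y : ℝ} (ha : 0 ≤ a) (hy : 0 ≤ y) : Real.exp (-(a * y)) ≤ 1 :=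
  Real.exp_le_one_iff.2 (neg_nonpos.2 (mul_nonneg ha hy))

lemma mul_exp_neg_mul_le {a : ℝ} (ha : 0 < a) (y : ℝ) : y * Real.exp (-(a * y)) ≤ 1 / a := by
  have h := Real.mul_exp_neg_le_exp_neg_one (a * y)
  rw [le_div_iff₀ ha]
  calc y * Real.exp (-(a * y)) * a = a * y * Real.exp (-(a * y)) := by ring
    _ ≤ Real.exp (-1) := h
    _ ≤ 1 := Real.exp_le_one_iff.2 (by norm_num)

section Laplace

variable {q : Measure ℝ} [IsProbabilityMeasure q] (hq : q (Iio 0) = 0)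

include hq

lemma integrable_of_abs_le_of_nonneg {F : ℝ → ℝ} (hF : Measurable F) {C : ℝ}
    (hC : ∀ y, 0 ≤ y → |F y| ≤ C) : Integrable F q :=
  Integrable.of_bound hF.aestronglyMeasurable C ((ae_nonneg_of_measure_Iio hq).mono hC)

lemma abs_integral_le_of_nonneg {F : ℝ → ℝ} {C : ℝ} (hC : ∀ y, 0 ≤ y → |F y| ≤ C) :
    |∫ y, F y ∂q| ≤ C := by
  simpa using norm_integral_le_of_norm_le_const (f := F)
    ((ae_nonneg_of_measure_Iio hq).mono hC)

lemma integrable_of_abs_sub_le_of_nonneg {F F' : ℝ → ℝ} (hF : Measurable F) (hF' : Measurable F')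
    (hi : Integrable F' q) {η : ℝ} (hle : ∀ y, 0 ≤ y → |F y - F' y| ≤ η) : Integrable F q := by
  simpa using hi.add (integrable_of_abs_le_of_nonneg hq (hF.sub hF') hle)

lemma abs_integral_sub_le_of_nonneg {F F' : ℝ → ℝ} (hi : Integrable F q)
    (hi' : Integrable F' q) {η : ℝ} (hle : ∀ y, 0 ≤ y → |F y - F' y| ≤ η) :
    |(∫ y, F y ∂q) - ∫ y, F' y ∂q| ≤ η := by
  rw [← integral_sub hi hi']
  exact abs_integral_le_of_nonneg hq hle

lemma integrable_exp_neg_mul {l : ℝ} (hl : 0 ≤ l) : Integrable (fun y ↦ Real.exp (-(l * y))) q :=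
  integrable_of_abs_le_of_nonneg hq (by fun_prop) fun y hy ↦ by
    rw [Real.abs_exp]
    exact exp_neg_mul_le_one hl hy

lemma integrable_mul_exp_neg_mul {l : ℝ} (hl : 0 < l) :
    Integrable (fun y ↦ y * Real.exp (-(l * y))) q :=
  integrable_of_abs_le_of_nonneg hq (by fun_prop) fun y hy ↦ by
    rw [abs_of_nonneg (by positivity)]
    exact mul_exp_neg_mul_le hl y

lemma hasDerivAt_laplace {l : ℝ} (hl : 0 < l) :
    HasDerivAt (fun l ↦ ∫ y, Real.exp (-(l * y)) ∂q) (-∫ y, y * Real.exp (-(l * y)) ∂q) l := by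
  have hmem : -l ∈ interior (ProbabilityTheory.integrableExpSet id q) := by
    refine mem_interior_iff_mem_nhds.2 (mem_of_superset (Iio_mem_nhds (neg_lt_zero.2 hl)) ?_)
    intro s (hs : s < 0)
    simpa [ProbabilityTheory.integrableExpSet] using integrable_exp_neg_mul hq (neg_pos.2 hs).le
  have h := (ProbabilityTheory.hasDerivAt_mgf hmem).comp l (hasDerivAt_neg l)
  simpa [Function.comp_def, ProbabilityTheory.mgf] using h

end Laplace

lemma abs_intervalIntegral_sub_le_of_continuousOn {g g' : ℝ → ℝ} {a b η : ℝ} (hab : a ≤ b)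
    (hg : ContinuousOn g (Icc a b)) (hg' : ContinuousOn g' (Icc a b))
    (hle : ∀ s ∈ Ioc a b, |g s - g' s| ≤ η) :
    |(∫ s in a..b, g s) - ∫ s in a..b, g' s| ≤ η * (b - a) := by
  rw [← intervalIntegral.integral_sub (hg.intervalIntegrable_of_Icc hab)
    (hg'.intervalIntegrable_of_Icc hab)]
  have h := intervalIntegral.norm_integral_le_of_norm_le_const (f := fun s ↦ g s - g' s)
    fun s hs ↦ hle s (uIoc_of_le hab ▸ hs)
  rwa [abs_of_nonneg (sub_nonneg.2 hab)] at h

/-- The integrated Kolmogorov forward equation (Dynkin's formula) at the starting point `x`, with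
`q t` the law at time `t`, `F` the test function and `A` the generator applied to `F`. -/
structure ForwardEquation (q : ℝ → Measure ℝ) (x : ℝ) (F A : ℝ → ℝ) : Prop where
  integrable : ∀ t, 0 ≤ t → Integrable F (q t)
  integrable_gen : ∀ t, 0 ≤ t → Integrable A (q t)
  continuousOn_gen : ContinuousOn (fun t ↦ ∫ y, A y ∂q t) (Ici 0)
  integral_eq : ∀ t, 0 ≤ t → ∫ y, F y ∂q t = F x + ∫ s in (0 : ℝ)..t, ∫ y, A y ∂q s

namespace ForwardEquation

variable {q : ℝ → Measure ℝ} {x : ℝ} {F A F' A' : ℝ → ℝ}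

lemma integral_zero (hF : ForwardEquation q x F A) : ∫ y, F y ∂q 0 = F x := by
  simpa using hF.integral_eq 0 le_rfl

lemma intervalIntegrable_gen (hF : ForwardEquation q x F A) {t : ℝ} (ht : 0 ≤ t) :
    IntervalIntegrable (fun s ↦ ∫ y, A y ∂q s) volume 0 t :=
  (hF.continuousOn_gen.mono Icc_subset_Ici_self).intervalIntegrable_of_Icc ht

lemma add (hF : ForwardEquation q x F A) (hF' : ForwardEquation q x F' A') :
    ForwardEquation q x (F + F') (A + A') where
  integrable t ht := (hF.integrable t ht).add (hF'.integrable t ht)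
  integrable_gen t ht := (hF.integrable_gen t ht).add (hF'.integrable_gen t ht)
  continuousOn_gen := (hF.continuousOn_gen.add hF'.continuousOn_gen).congr fun t ht ↦
    integral_add (hF.integrable_gen t ht) (hF'.integrable_gen t ht)
  integral_eq t ht := by
    have hA : ∫ s in (0 : ℝ)..t, ∫ y, (A + A') y ∂q s =
        ∫ s in (0 : ℝ)..t, ((∫ y, A y ∂q s) + ∫ y, A' y ∂q s) :=
      intervalIntegral.integral_congr fun s hs ↦ by
        have hs0 : 0 ≤ s := (uIcc_of_le ht ▸ hs).1
        exact integral_add (hF.integrable_gen s hs0) (hF'.integrable_gen s hs0)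
    rw [integral_add' (hF.integrable t ht) (hF'.integrable t ht), hA, hF.integral_eq t ht,
      hF'.integral_eq t ht, intervalIntegral.integral_add (hF.intervalIntegrable_gen ht)
        (hF'.intervalIntegrable_gen ht), Pi.add_apply]
    ring

lemma const_mul (hF : ForwardEquation q x F A) (a : ℝ) :
    ForwardEquation q x (fun y ↦ a * F y) (fun y ↦ a * A y) where
  integrable t ht := (hF.integrable t ht).const_mul a
  integrable_gen t ht := (hF.integrable_gen t ht).const_mul a
  continuousOn_gen := by
    simp only [integral_const_mul]
    exact continuousOn_const.mul hF.continuousOn_gen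
  integral_eq t ht := by
    simp only [integral_const_mul, intervalIntegral.integral_const_mul]
    rw [hF.integral_eq t ht, mul_add]

lemma const (hq : ∀ t, 0 ≤ t → IsProbabilityMeasure (q t)) (a : ℝ) :
    ForwardEquation q x (fun _ ↦ a) (fun _ ↦ 0) where
  integrable t ht := have := hq t ht; integrable_const a
  integrable_gen _ _ := integrable_zero _ _ _
  continuousOn_gen := by simpa using continuousOn_const
  integral_eq t ht := by
    have := hq t ht
    simp

section Nonneg

variable (hq0 : ∀ t, 0 ≤ t → q t (Iio 0) = 0)

include hq0

lemma congr_gen (hF : ForwardEquation q x F A) (hA : EqOn A A' (Ici 0)) :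
    ForwardEquation q x F A' := by
  have hae (t : ℝ) (ht : 0 ≤ t) : A =ᵐ[q t] A' :=
    (ae_nonneg_of_measure_Iio (hq0 t ht)).mono fun y hy ↦ hA hy
  refine ⟨hF.integrable, fun t ht ↦ (hF.integrable_gen t ht).congr (hae t ht),
    hF.continuousOn_gen.congr fun t ht ↦ (integral_congr_ae (hae t ht)).symm, fun t ht ↦ ?_⟩
  rw [hF.integral_eq t ht, intervalIntegral.integral_congr fun s hs ↦
    integral_congr_ae (hae s (uIcc_of_le ht ▸ hs).1)]

lemma of_forall_exists_abs_sub_le (hq : ∀ t, 0 ≤ t → IsProbabilityMeasure (q t)) (hx : 0 ≤ x)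
    (hF : Measurable F) (hA : Measurable A)
    (happrox : ∀ η, 0 < η → ∃ F' A', Measurable F' ∧ Measurable A' ∧ ForwardEquation q x F' A' ∧
      (∀ y, 0 ≤ y → |F y - F' y| ≤ η) ∧ ∀ y, 0 ≤ y → |A y - A' y| ≤ η) :
    ForwardEquation q x F A := by
  have hdist {B B' : ℝ → ℝ} {η t : ℝ} (ht : 0 ≤ t) (hi : Integrable B (q t))
      (hi' : Integrable B' (q t)) (hle : ∀ y, 0 ≤ y → |B y - B' y| ≤ η) :
      |(∫ y, B y ∂q t) - ∫ y, B' y ∂q t| ≤ η := by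
    have := hq t ht
    exact abs_integral_sub_le_of_nonneg (hq0 t ht) hi hi' hle
  have hFi (t : ℝ) (ht : 0 ≤ t) : Integrable F (q t) := by
    obtain ⟨F', A', hF', -, hFA, hle, -⟩ := happrox 1 one_pos
    have := hq t ht
    exact integrable_of_abs_sub_le_of_nonneg (hq0 t ht) hF hF' (hFA.integrable t ht) hle
  have hAi (t : ℝ) (ht : 0 ≤ t) : Integrable A (q t) := by
    obtain ⟨F', A', -, hA', hFA, -, hle⟩ := happrox 1 one_pos
    have := hq t ht
    exact integrable_of_abs_sub_le_of_nonneg (hq0 t ht) hA hA' (hFA.integrable_gen t ht) hle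
  have hcont : ContinuousOn (fun t ↦ ∫ y, A y ∂q t) (Ici 0) := by
    refine continuousOn_of_uniform_approx_of_continuousOn fun u hu ↦ ?_
    obtain ⟨η, hη, hηu⟩ := Metric.mem_uniformity_dist.1 hu
    obtain ⟨F', A', -, -, hFA, -, hle⟩ := happrox (η / 2) (half_pos hη)
    exact ⟨_, hFA.continuousOn_gen, fun t ht ↦ hηu ((hdist ht (hAi t ht)
      (hFA.integrable_gen t ht) hle).trans_lt (half_lt_self hη))⟩
  refine ⟨hFi, hAi, hcont, fun t ht ↦ eq_of_forall_dist_le fun η hη ↦ ?_⟩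
  obtain ⟨F', A', -, -, hFA, hleF, hleA⟩ := happrox (η / (2 + t)) (by positivity)
  have hA_int : |(∫ s in (0 : ℝ)..t, ∫ y, A y ∂q s) - ∫ s in (0 : ℝ)..t, ∫ y, A' y ∂q s| ≤
      η / (2 + t) * t := by
    have h := abs_intervalIntegral_sub_le_of_continuousOn ht (hcont.mono Icc_subset_Ici_self)
      (hFA.continuousOn_gen.mono Icc_subset_Ici_self) fun s hs ↦
        hdist hs.1.le (hAi s hs.1.le) (hFA.integrable_gen s hs.1.le) hleA
    rwa [sub_zero] at h
  have hF_int := hdist ht (hFi t ht) (hFA.integrable t ht) hleF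
  have heq := hFA.integral_eq t ht
  have hη' : η / (2 + t) * t + 2 * (η / (2 + t)) = η := by
    have : 2 + t ≠ 0 := by positivity
    field_simp
    ring
  have hFx := abs_le.1 (hleF x hx)
  rw [abs_le] at hA_int hF_int
  rw [Real.dist_eq, abs_le]
  constructor <;> linarith

end Nonneg

lemma continuousOn_integral (hF : ForwardEquation q x F A) :
    ContinuousOn (fun t ↦ ∫ y, F y ∂q t) (Ici 0) :=
  (continuousOn_const.add (continuousOn_integral_of_continuousOn hF.continuousOn_gen)).congr
    hF.integral_eq

lemma hasDerivWithinAt (hF : ForwardEquation q x F A) {t : ℝ} (ht : 0 ≤ t) :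
    HasDerivWithinAt (fun s ↦ ∫ y, F y ∂q s) (∫ y, A y ∂q t) (Ici t) t :=
  ((hasDerivWithinAt_integral_of_continuousOn (hF.continuousOn_gen.mono Icc_subset_Ici_self)
    ⟨ht, lt_add_one t⟩).const_add (F x)).congr
    (fun s hs ↦ hF.integral_eq s (ht.trans hs)) (hF.integral_eq t ht)

lemma continuousOn_exp_mul (hF : ForwardEquation q x F A) (C : ℝ) :
    ContinuousOn (fun s ↦ Real.exp (C * s) * ((∫ y, A y ∂q s) + C * ∫ y, F y ∂q s)) (Ici 0) :=
  ContinuousOn.mul (by fun_prop)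
    (hF.continuousOn_gen.add (continuousOn_const.mul hF.continuousOn_integral))

lemma exp_mul_integral_eq (hF : ForwardEquation q x F A) (C : ℝ) {t : ℝ} (ht : 0 ≤ t) :
    Real.exp (C * t) * ∫ y, F y ∂q t =
      F x + ∫ s in (0 : ℝ)..t, Real.exp (C * s) * ((∫ y, A y ∂q s) + C * ∫ y, F y ∂q s) := by
  have hderiv (s : ℝ) (hs : s ∈ Ioo 0 t) :
      HasDerivWithinAt (fun s ↦ Real.exp (C * s) * ∫ y, F y ∂q s)
        (Real.exp (C * s) * ((∫ y, A y ∂q s) + C * ∫ y, F y ∂q s)) (Ioi s) s := by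
    have hexp : HasDerivWithinAt (fun s ↦ Real.exp (C * s)) (Real.exp (C * s) * (C * 1))
        (Ici s) s := ((hasDerivAt_id' s).const_mul C).exp.hasDerivWithinAt
    exact ((hexp.mul (hF.hasDerivWithinAt hs.1.le)).mono Ioi_subset_Ici_self).congr_deriv (by ring)
  have hcont : ContinuousOn (fun s ↦ Real.exp (C * s) * ∫ y, F y ∂q s) (Icc 0 t) :=
    ContinuousOn.mul (by fun_prop) (hF.continuousOn_integral.mono Icc_subset_Ici_self)
  rw [intervalIntegral.integral_eq_sub_of_hasDeriv_right_of_le ht hcont hderiv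
    (((hF.continuousOn_exp_mul C).mono Icc_subset_Ici_self).intervalIntegrable_of_Icc ht)]
  simp [hF.integral_zero]

end ForwardEquation

lemma exp_neg_mul_mem_Icc {a y : ℝ} (ha : 0 ≤ a) (hy : 0 ≤ y) : Real.exp (-(a * y)) ∈ Icc 0 1 :=
  ⟨(Real.exp_pos _).le, exp_neg_mul_le_one ha hy⟩

lemma integrable_comp_exp_neg_mul {q : Measure ℝ} [IsProbabilityMeasure q] (hq : q (Iio 0) = 0)
    {g : ℝ → ℝ} (hg : Continuous g) {a : ℝ} (ha : 0 ≤ a) :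
    Integrable (fun y ↦ g (Real.exp (-(a * y)))) q := by
  obtain ⟨C, hC⟩ := isCompact_Icc.exists_bound_of_continuousOn (s := Icc 0 1) hg.continuousOn
  exact integrable_of_abs_le_of_nonneg hq (by fun_prop) fun y hy ↦ hC _ (exp_neg_mul_mem_Icc ha hy)

section WeakContinuity

variable {q : ℝ → Measure ℝ} (hq : ∀ t, 0 ≤ t → IsProbabilityMeasure (q t))
  (hq0 : ∀ t, 0 ≤ t → q t (Iio 0) = 0)
  (hlap : ∀ l, 0 < l → ContinuousOn (fun t ↦ ∫ y, Real.exp (-(l * y)) ∂q t) (Ici 0))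
  {ε : ℝ} (hε : 0 < ε)

include hq hq0 hlap hε

open Polynomial in
lemma continuousOn_integral_eval_exp_of_laplace (p : ℝ[X]) :
    ContinuousOn (fun t ↦ ∫ y, p.eval (Real.exp (-(ε * y))) ∂q t) (Ici 0) := by
  induction p using Polynomial.induction_on' with
  | add p p' hp hp' =>
    refine (hp.add hp').congr fun t ht ↦ ?_
    have := hq t ht
    simp only [eval_add]
    exact integral_add (integrable_comp_exp_neg_mul (hq0 t ht) p.continuous hε.le)
      (integrable_comp_exp_neg_mul (hq0 t ht) p'.continuous hε.le)
  | monomial n a =>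
    simp only [eval_monomial, integral_const_mul]
    refine continuousOn_const.mul ?_
    rcases n.eq_zero_or_pos with rfl | hn
    · refine (continuousOn_const (c := 1)).congr fun t ht ↦ ?_
      have := hq t ht
      simp
    · refine (hlap (n * ε) (by positivity)).congr fun t _ ↦
        integral_congr_ae (.of_forall fun y ↦ ?_)
      simp only [← Real.exp_nat_mul]
      ring_nf

lemma continuousOn_integral_comp_exp_of_laplace {g : ℝ → ℝ} (hg : Continuous g) :
    ContinuousOn (fun t ↦ ∫ y, g (Real.exp (-(ε * y))) ∂q t) (Ici 0) := by
  refine continuousOn_of_uniform_approx_of_continuousOn fun u hu ↦ ?_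
  obtain ⟨η, hη, hηu⟩ := Metric.mem_uniformity_dist.1 hu
  obtain ⟨p, hp⟩ :=
    exists_polynomial_near_of_continuousOn 0 1 g hg.continuousOn (η / 2) (half_pos hη)
  refine ⟨_, continuousOn_integral_eval_exp_of_laplace hq hq0 hlap hε p,
    fun t ht ↦ hηu (lt_of_le_of_lt ?_ (half_lt_self hη))⟩
  have := hq t ht
  refine abs_integral_sub_le_of_nonneg (hq0 t ht) (integrable_comp_exp_neg_mul (hq0 t ht) hg hε.le)
    (integrable_comp_exp_neg_mul (hq0 t ht) p.continuous hε.le) fun y hy ↦ ?_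
  rw [abs_sub_comm]
  exact (hp _ (exp_neg_mul_mem_Icc hε.le hy)).le

end WeakContinuity

section Exponential

variable {φ ψ : ℝ → ℝ} {β σ h : ℝ} {m ν : Measure ℝ} {v : ℝ → ℝ → ℝ} {Q : ℝ → ℝ → Measure ℝ}
  (hφ : IsBranchingMechanism φ β σ m) (hψ : IsImmigrationMechanism ψ h ν) (hv : IsCumulant φ v)

include hφ hψ hv

lemma continuousOn_immigration_comp_cumulant {l : ℝ} (hl : 0 < l) :
    ContinuousOn (fun s ↦ ψ (v s l)) (Ici 0) :=
  have hpath := hv.isCumulantPath hl.le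
  hψ.continuousOn.comp (hpath.continuousOn hφ.convexOn hφ.continuousOn hφ.map_zero) hpath.nonneg

lemma integral_immigration_comp_cumulant_add {l s t : ℝ} (hl : 0 < l) (hs : 0 ≤ s) (ht : 0 ≤ t) :
    ∫ r in (0 : ℝ)..(t + s), ψ (v r l) =
      (∫ r in (0 : ℝ)..s, ψ (v r l)) + ∫ r in (0 : ℝ)..t, ψ (v r (v s l)) := by
  have hint {a : ℝ} (ha : 0 ≤ a) : IntervalIntegrable (fun r ↦ ψ (v r l)) volume 0 a :=
    ((continuousOn_immigration_comp_cumulant hφ hψ hv hl).mono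
      Icc_subset_Ici_self).intervalIntegrable_of_Icc ha
  have hflow : ∫ r in (0 : ℝ)..t, ψ (v r (v s l)) = ∫ r in s..(t + s), ψ (v r l) := by
    have hshift := intervalIntegral.integral_comp_add_right (a := 0) (b := t) (fun r ↦ ψ (v r l)) s
    rw [zero_add] at hshift
    rw [← hshift]
    refine intervalIntegral.integral_congr fun r hr ↦ ?_
    rw [hv.flow hφ.convexOn hφ.continuousOn hφ.map_zero hl hs (uIcc_of_le ht ▸ hr).1]
  rw [hflow, intervalIntegral.integral_add_adjacent_intervals (hint hs)
    ((hint hs).symm.trans (hint (add_nonneg ht hs)))]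

variable (hQ : IsCBISemigroup v ψ Q) {x : ℝ} (hx : 0 ≤ x) {l : ℝ} (hl : 0 < l)

include hQ hx hl

lemma laplace_add {s t : ℝ} (hs : 0 ≤ s) (ht : 0 ≤ t) :
    ∫ y, Real.exp (-(l * y)) ∂Q (t + s) x =
      Real.exp (-∫ r in (0 : ℝ)..s, ψ (v r l)) * ∫ y, Real.exp (-(v s l * y)) ∂Q t x := by
  rw [(hQ _ x (add_nonneg ht hs) hx).2.2 l hl.le, (hQ t x ht hx).2.2 _ (hv l hl.le s hs).1,
    ← Real.exp_add, integral_immigration_comp_cumulant_add hφ hψ hv hl hs ht,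
    hv.flow hφ.convexOn hφ.continuousOn hφ.map_zero hl hs ht]
  ring_nf

lemma continuousOn_laplace : ContinuousOn (fun t ↦ ∫ y, Real.exp (-(l * y)) ∂Q t x) (Ici 0) := by
  have hcont := (hv.isCumulantPath hl.le).continuousOn hφ.convexOn hφ.continuousOn hφ.map_zero
  refine ContinuousOn.congr (Real.continuous_exp.comp_continuousOn
    ((continuousOn_const.mul hcont).neg.sub (continuousOn_integral_of_continuousOn
      (continuousOn_immigration_comp_cumulant hφ hψ hv hl)))) fun t ht ↦ (hQ t x ht hx).2.2 l hl.le

-- The flow property turns the time derivative into a `λ`-derivative of the Laplace transform.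
lemma hasDerivWithinAt_laplace {t : ℝ} (ht : 0 ≤ t) :
    HasDerivWithinAt (fun t ↦ ∫ y, Real.exp (-(l * y)) ∂Q t x)
      (∫ y, (φ l * y - ψ l) * Real.exp (-(l * y)) ∂Q t x) (Ici t) t := by
  obtain ⟨_, hq0, -⟩ := hQ t x ht hx
  have hpath := hv.isCumulantPath hl.le
  have hv0 : v 0 l = l := hpath.map_zero
  have hlap := hasDerivAt_laplace hq0 hl
  have hvd := hpath.hasDerivWithinAt hφ.convexOn hφ.continuousOn hφ.map_zero le_rfl
  have himm := hasDerivWithinAt_integral_of_continuousOn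
    ((continuousOn_immigration_comp_cumulant hφ hψ hv hl).mono Icc_subset_Ici_self)
    (left_mem_Ico.2 zero_lt_one)
  rw [hv0] at hvd himm
  have hprod := himm.neg.exp.mul (hlap.comp_hasDerivWithinAt_of_eq 0 hvd hv0.symm)
  have hshift := HasDerivWithinAt.comp_of_eq t hprod
    ((hasDerivAt_id' t).sub_const t).hasDerivWithinAt
    (fun r (hr : t ≤ r) ↦ sub_nonneg.2 hr : MapsTo (fun r ↦ r - t) (Ici t) (Ici 0))
    (sub_self t).symm
  have hflow (r : ℝ) (hr : t ≤ r) := laplace_add hφ hψ hv hQ hx hl (sub_nonneg.2 hr) ht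
  simp only [add_sub_cancel] at hflow
  refine (hshift.congr hflow (hflow t le_rfl)).congr_deriv ?_
  have hsplit : ∫ y, (φ l * y - ψ l) * Real.exp (-(l * y)) ∂Q t x =
      φ l * ∫ y, y * Real.exp (-(l * y)) ∂Q t x - ψ l * ∫ y, Real.exp (-(l * y)) ∂Q t x := by
    rw [← integral_const_mul, ← integral_const_mul, ← integral_sub
      ((integrable_mul_exp_neg_mul hq0 hl).const_mul _)
      ((integrable_exp_neg_mul hq0 hl.le).const_mul _)]
    exact integral_congr_ae (.of_forall fun y ↦ by ring)
  rw [hsplit]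
  simp [hv0]
  ring

lemma forwardEquation_exp : ForwardEquation (Q · x) x (fun y ↦ Real.exp (-(l * y)))
    (fun y ↦ (φ l * y - ψ l) * Real.exp (-(l * y))) := by
  have hprob (t : ℝ) (ht : 0 ≤ t) := (hQ t x ht hx).1
  have hq0 (t : ℝ) (ht : 0 ≤ t) := (hQ t x ht hx).2.1
  have hlap {l : ℝ} (hl : 0 < l) := continuousOn_laplace hφ hψ hv hQ hx hl
  -- With `u = exp (-(l/2) y)`, the function `y * exp (-l y)` is `(2/l) * u * negMulLog u`.
  have hgen : (fun y ↦ (φ l * y - ψ l) * Real.exp (-(l * y))) = fun y ↦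
      (fun u ↦ φ l * (2 / l * (u * Real.negMulLog u)) - ψ l * u ^ 2) (Real.exp (-(l / 2 * y))) := by
    funext y
    have hsq : Real.exp (-(l * y)) = Real.exp (-(l / 2 * y)) ^ 2 := by
      rw [← Real.exp_nat_mul]
      ring_nf
    simp only [Real.negMulLog, Real.log_exp, hsq]
    field_simp
  have hcont :
      ContinuousOn (fun t ↦ ∫ y, (φ l * y - ψ l) * Real.exp (-(l * y)) ∂Q t x) (Ici 0) := by
    rw [hgen]
    exact continuousOn_integral_comp_exp_of_laplace hprob hq0 (fun l ↦ hlap) (half_pos hl)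
      (g := fun u ↦ φ l * (2 / l * (u * Real.negMulLog u)) - ψ l * u ^ 2) (by fun_prop)
  refine ⟨fun t ht ↦ ?_, fun t ht ↦ ?_, hcont, fun t ht ↦ ?_⟩
  · have := hprob t ht
    exact integrable_exp_neg_mul (hq0 t ht) hl.le
  · have := hprob t ht
    simp only [sub_mul, mul_assoc]
    exact ((integrable_mul_exp_neg_mul (hq0 t ht) hl).const_mul (φ l)).sub
      ((integrable_exp_neg_mul (hq0 t ht) hl.le).const_mul (ψ l))
  · have hftc := intervalIntegral.integral_eq_sub_of_hasDeriv_right_of_le ht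
      ((hlap hl).mono Icc_subset_Ici_self)
      (fun s hs ↦ (hasDerivWithinAt_laplace hφ hψ hv hQ hx hl hs.1.le).mono Ioi_subset_Ici_self)
      ((hcont.mono Icc_subset_Ici_self).intervalIntegrable_of_Icc ht)
    have h0 : ∫ y, Real.exp (-(l * y)) ∂Q 0 x = Real.exp (-(l * x)) := by
      rw [(hQ 0 x le_rfl hx).2.2 l hl.le, (hv.isCumulantPath hl.le).map_zero]
      simp [mul_comm]
    rw [h0] at hftc
    linarith

end Exponential

/-! ### The generator -/

/-- The integrand of the branching part of the generator: the increment of `F` at `y` over a jump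
of size `z`, compensated for the small jumps. -/
def compensatedIncrement (F : ℝ → ℝ) (y z : ℝ) : ℝ :=
  F (y + z) - F y - if z ≤ 1 then z * deriv F y else 0

/-- The generator of the spectrally positive Lévy process with Laplace exponent `φ`; the
CB-process runs it at speed `y`. -/
def branchingGenerator (β σ : ℝ) (m : Measure ℝ) (F : ℝ → ℝ) (y : ℝ) : ℝ :=
  -β * deriv F y + σ ^ 2 / 2 * deriv (deriv F) y + ∫ z, compensatedIncrement F y z ∂m

/-- The generator of the subordinator with Laplace exponent `ψ`. -/
def immigrationGenerator (h : ℝ) (ν : Measure ℝ) (F : ℝ → ℝ) (y : ℝ) : ℝ :=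
  h * deriv F y + ∫ z, (F (y + z) - F y) ∂ν

/-- The generator of the CBI-process. -/
def cbiGenerator (β σ h : ℝ) (m ν : Measure ℝ) (F : ℝ → ℝ) (y : ℝ) : ℝ :=
  y * branchingGenerator β σ m F y + immigrationGenerator h ν F y

section ContDiff

variable {F F' : ℝ → ℝ} (hF : ContDiff ℝ 2 F)

include hF

lemma differentiable_of_contDiff_two : Differentiable ℝ F := hF.differentiable (by norm_num)

lemma contDiff_one_deriv : ContDiff ℝ 1 (deriv F) :=
  (contDiff_succ_iff_deriv (n := 1)).1 (by norm_num [hF]) |>.2.2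

lemma differentiable_deriv_of_contDiff_two : Differentiable ℝ (deriv F) :=
  (contDiff_one_deriv hF).differentiable (by norm_num)

lemma continuous_deriv_deriv_of_contDiff_two : Continuous (deriv (deriv F)) :=
  (contDiff_one_deriv hF).continuous_deriv le_rfl

lemma deriv_fun_add_of_contDiff_two (hF' : ContDiff ℝ 2 F') :
    deriv (fun y ↦ F y + F' y) = fun y ↦ deriv F y + deriv F' y :=
  funext fun y ↦ deriv_fun_add (differentiable_of_contDiff_two hF y)
    (differentiable_of_contDiff_two hF' y)

lemma deriv_deriv_fun_add_of_contDiff_two (hF' : ContDiff ℝ 2 F') :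
    deriv (deriv fun y ↦ F y + F' y) = fun y ↦ deriv (deriv F) y + deriv (deriv F') y := by
  rw [deriv_fun_add_of_contDiff_two hF hF']
  exact funext fun y ↦ deriv_fun_add (differentiable_deriv_of_contDiff_two hF y)
    (differentiable_deriv_of_contDiff_two hF' y)

lemma measurable_compensatedIncrement :
    Measurable (Function.uncurry (compensatedIncrement F)) := by
  have hc := hF.continuous
  unfold compensatedIncrement Function.uncurry
  exact (by fun_prop : Measurable fun p : ℝ × ℝ ↦ F (p.1 + p.2) - F p.1).sub
    (.ite (measurableSet_le measurable_snd measurable_const) (by fun_prop) measurable_const)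

lemma measurable_cbiGenerator (β σ h : ℝ) (m ν : Measure ℝ) [SFinite m] [SFinite ν] :
    Measurable (cbiGenerator β σ h m ν F) := by
  have hc := hF.continuous
  have hjump : Measurable fun y ↦ ∫ z, compensatedIncrement F y z ∂m :=
    (measurable_compensatedIncrement hF).stronglyMeasurable.integral_prod_right.measurable
  have himm : Measurable fun y ↦ ∫ z, (F (y + z) - F y) ∂ν :=
    (by fun_prop : Measurable fun p : ℝ × ℝ ↦ F (p.1 + p.2) - F p.1)
      |>.stronglyMeasurable.integral_prod_right'.measurable
  unfold cbiGenerator branchingGenerator immigrationGenerator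
  fun_prop

end ContDiff

/-- A `C²` function whose first two derivatives are at most `B * exp (-ε y)` in absolute value on
`[0, ∞)`: on such functions the generator of the CBI-process is bounded, in spite of its linear
coefficients. -/
structure HasExpDecay (F : ℝ → ℝ) (ε B : ℝ) : Prop where
  contDiff : ContDiff ℝ 2 F
  abs_deriv_le : ∀ y, 0 ≤ y → |deriv F y| ≤ B * Real.exp (-(ε * y))
  abs_deriv2_le : ∀ y, 0 ≤ y → |deriv (deriv F) y| ≤ B * Real.exp (-(ε * y))

lemma abs_sub_sub_mul_deriv_le {F : ℝ → ℝ} (hF : ContDiff ℝ 2 F) {y z C : ℝ} (hz : 0 ≤ z)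
    (hC : ∀ w ∈ Icc y (y + z), |deriv (deriv F) w| ≤ C) :
    |F (y + z) - F y - z * deriv F y| ≤ C * z ^ 2 := by
  have hy : y ∈ Icc y (y + z) := left_mem_Icc.2 (by linarith)
  have hyz : y + z ∈ Icc y (y + z) := right_mem_Icc.2 (by linarith)
  have hC0 : 0 ≤ C := (abs_nonneg _).trans (hC y hy)
  have hderiv : ∀ w ∈ Icc y (y + z), ‖deriv F w - deriv F y‖ ≤ C * z := fun w hw ↦ by
    refine ((convex_Icc y (y + z)).norm_image_sub_le_of_norm_deriv_le
      (fun w _ ↦ differentiable_deriv_of_contDiff_two hF w) hC hy hw).trans ?_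
    rw [Real.norm_of_nonneg (sub_nonneg.2 hw.1)]
    exact mul_le_mul_of_nonneg_left (by linarith [hw.2]) hC0
  have hmain := (convex_Icc y (y + z)).norm_image_sub_le_of_norm_hasDerivWithin_le
    (f := fun w ↦ F w - deriv F y * w) (fun w _ ↦
      ((differentiable_of_contDiff_two hF w).hasDerivAt.sub
        ((hasDerivAt_id' w).const_mul (deriv F y))).hasDerivWithinAt)
    (by simpa using hderiv) hy hyz
  rw [add_sub_cancel_left, Real.norm_of_nonneg hz, Real.norm_eq_abs] at hmain
  calc _ = |F (y + z) - deriv F y * (y + z) - (F y - deriv F y * y)| := by congr 1; ring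
    _ ≤ C * z ^ 2 := by linarith

namespace HasExpDecay

variable {F F' : ℝ → ℝ} {ε B B' : ℝ}

lemma const_nonneg (hF : HasExpDecay F ε B) : 0 ≤ B := by
  simpa using (abs_nonneg _).trans (hF.abs_deriv_le 0 le_rfl)

lemma abs_increment_le_exp (hF : HasExpDecay F ε B) (hε : 0 < ε) {y z : ℝ} (hy : 0 ≤ y)
    (hz : 0 ≤ z) : |F (y + z) - F y| ≤ B / ε * Real.exp (-(ε * y)) := by
  have hB := hF.const_nonneg
  have hmain := image_norm_le_of_norm_deriv_right_le_deriv_boundary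
    (f := fun w ↦ F w - F y) (a := y) (b := y + z) (f' := deriv F)
    (B := fun w ↦ B / ε * (Real.exp (-(ε * y)) - Real.exp (-(ε * w))))
    (B' := fun w ↦ B * Real.exp (-(ε * w)))
    (hF.contDiff.continuous.sub continuous_const).continuousOn
    (fun w _ ↦
      ((differentiable_of_contDiff_two hF.contDiff w).hasDerivAt.sub_const _).hasDerivWithinAt)
    (by simp)
    (fun w ↦ by
      refine ((((hasDerivAt_id' w).const_mul ε).fun_neg.exp.const_sub _).const_mul
        (B / ε)).congr_deriv ?_
      field_simp)
    (fun w hw ↦ hF.abs_deriv_le w (hy.trans hw.1)) (right_mem_Icc.2 (by linarith))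
  refine hmain.trans ?_
  gcongr
  linarith [Real.exp_pos (-(ε * (y + z)))]

lemma abs_increment_le_mul (hF : HasExpDecay F ε B) (hε : 0 ≤ ε) {y z : ℝ} (hy : 0 ≤ y)
    (hz : 0 ≤ z) : |F (y + z) - F y| ≤ B * Real.exp (-(ε * y)) * z := by
  have hB := hF.const_nonneg
  have := (convex_Icc y (y + z)).norm_image_sub_le_of_norm_deriv_le
    (C := B * Real.exp (-(ε * y)))
    (fun w _ ↦ differentiable_of_contDiff_two hF.contDiff w)
    (fun w hw ↦ (hF.abs_deriv_le w (hy.trans hw.1)).trans (by gcongr; exact hw.1))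
    (left_mem_Icc.2 (by linarith)) (right_mem_Icc.2 (by linarith))
  rwa [add_sub_cancel_left, Real.norm_of_nonneg hz] at this

lemma abs_increment_le (hF : HasExpDecay F ε B) (hε : 0 < ε) {y z : ℝ} (hy : 0 ≤ y)
    (hz : 0 ≤ z) :
    |F (y + z) - F y| ≤ (1 + 1 / ε) * B * Real.exp (-(ε * y)) * min 1 z := by
  have hB := hF.const_nonneg
  rcases le_total 1 z with h | h
  · refine (hF.abs_increment_le_exp hε hy hz).trans ?_
    rw [min_eq_left h, mul_one]
    gcongr
    linarith [show B / ε = 1 / ε * B by ring]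
  · refine (hF.abs_increment_le_mul hε.le hy hz).trans ?_
    rw [min_eq_right h]
    gcongr
    nlinarith [show 0 ≤ 1 / ε * B by positivity]

lemma abs_compensatedIncrement_le (hF : HasExpDecay F ε B) (hε : 0 < ε) {y z : ℝ} (hy : 0 ≤ y)
    (hz : 0 ≤ z) : |compensatedIncrement F y z| ≤
      (1 + 1 / ε) * B * Real.exp (-(ε * y)) * min 1 (z ^ 2) := by
  have hB := hF.const_nonneg
  unfold compensatedIncrement
  split_ifs with h
  · refine (abs_sub_sub_mul_deriv_le hF.contDiff (C := B * Real.exp (-(ε * y))) hz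
      fun w hw ↦ (hF.abs_deriv2_le w (hy.trans hw.1)).trans (by gcongr; exact hw.1)).trans ?_
    rw [min_eq_right (pow_le_one₀ hz h)]
    gcongr
    nlinarith [show 0 ≤ 1 / ε * B by positivity]
  · have h' : 1 ≤ z := (not_le.1 h).le
    rw [sub_zero, min_eq_left (one_le_pow₀ h')]
    simpa [min_eq_left h'] using hF.abs_increment_le hε hy hz

section Generator

variable {φ ψ : ℝ → ℝ} {β σ h : ℝ} {m ν : Measure ℝ} (hε : 0 < ε)

include hε

lemma integrable_compensatedIncrement (hF : HasExpDecay F ε B)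
    (hφ : IsBranchingMechanism φ β σ m) {y : ℝ} (hy : 0 ≤ y) :
    Integrable (compensatedIncrement F y) m := by
  refine (hφ.integrable_min_one_sq.const_mul ((1 + 1 / ε) * B * Real.exp (-(ε * y)))).mono'
    (measurable_compensatedIncrement hF.contDiff).of_uncurry_left.aestronglyMeasurable ?_
  filter_upwards [hφ.ae_pos] with z hz using hF.abs_compensatedIncrement_le hε hy hz.le

lemma integrable_increment (hF : HasExpDecay F ε B) (hψ : IsImmigrationMechanism ψ h ν)
    {y : ℝ} (hy : 0 ≤ y) : Integrable (fun z ↦ F (y + z) - F y) ν := by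
  have hc := hF.contDiff.continuous
  refine (hψ.integrable_min_one.const_mul ((1 + 1 / ε) * B * Real.exp (-(ε * y)))).mono'
    (by fun_prop : Continuous fun z ↦ F (y + z) - F y).aestronglyMeasurable ?_
  filter_upwards [hψ.ae_pos] with z hz using hF.abs_increment_le hε hy hz.le

lemma abs_branchingGenerator_le (hF : HasExpDecay F ε B) (hφ : IsBranchingMechanism φ β σ m)
    {y : ℝ} (hy : 0 ≤ y) : |branchingGenerator β σ m F y| ≤
      (|β| + σ ^ 2 / 2 + (1 + 1 / ε) * ∫ z, min 1 (z ^ 2) ∂m) * B * Real.exp (-(ε * y)) := by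
  have hjump : |∫ z, compensatedIncrement F y z ∂m| ≤
      (1 + 1 / ε) * B * Real.exp (-(ε * y)) * ∫ z, min 1 (z ^ 2) ∂m := by
    rw [← integral_const_mul, ← Real.norm_eq_abs]
    refine norm_integral_le_of_norm_le (hφ.integrable_min_one_sq.const_mul _) ?_
    filter_upwards [hφ.ae_pos] with z hz using hF.abs_compensatedIncrement_le hε hy hz.le
  calc |branchingGenerator β σ m F y|
      ≤ |-β * deriv F y| + |σ ^ 2 / 2 * deriv (deriv F) y|
        + |∫ z, compensatedIncrement F y z ∂m| := abs_add_three _ _ _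
    _ ≤ |β| * (B * Real.exp (-(ε * y))) + σ ^ 2 / 2 * (B * Real.exp (-(ε * y)))
        + (1 + 1 / ε) * B * Real.exp (-(ε * y)) * ∫ z, min 1 (z ^ 2) ∂m := by
      rw [abs_mul, abs_mul, abs_neg, abs_of_nonneg (by positivity : 0 ≤ σ ^ 2 / 2)]
      gcongr
      exacts [hF.abs_deriv_le y hy, hF.abs_deriv2_le y hy]
    _ = _ := by ring

lemma abs_immigrationGenerator_le (hF : HasExpDecay F ε B) (hψ : IsImmigrationMechanism ψ h ν)
    {y : ℝ} (hy : 0 ≤ y) : |immigrationGenerator h ν F y| ≤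
      (h + (1 + 1 / ε) * ∫ z, min 1 z ∂ν) * B * Real.exp (-(ε * y)) := by
  have hh := hψ.h_nonneg
  have hjump : |∫ z, (F (y + z) - F y) ∂ν| ≤
      (1 + 1 / ε) * B * Real.exp (-(ε * y)) * ∫ z, min 1 z ∂ν := by
    rw [← integral_const_mul, ← Real.norm_eq_abs]
    refine norm_integral_le_of_norm_le (hψ.integrable_min_one.const_mul _) ?_
    filter_upwards [hψ.ae_pos] with z hz using hF.abs_increment_le hε hy hz.le
  calc |immigrationGenerator h ν F y|
      ≤ |h * deriv F y| + |∫ z, (F (y + z) - F y) ∂ν| := abs_add_le _ _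
    _ ≤ h * (B * Real.exp (-(ε * y)))
        + (1 + 1 / ε) * B * Real.exp (-(ε * y)) * ∫ z, min 1 z ∂ν := by
      rw [abs_mul, abs_of_nonneg hh]
      gcongr
      exact hF.abs_deriv_le y hy
    _ = _ := by ring

lemma abs_cbiGenerator_le (hF : HasExpDecay F ε B) (hφ : IsBranchingMechanism φ β σ m)
    (hψ : IsImmigrationMechanism ψ h ν) {y : ℝ} (hy : 0 ≤ y) : |cbiGenerator β σ h m ν F y| ≤
      ((|β| + σ ^ 2 / 2 + (1 + 1 / ε) * ∫ z, min 1 (z ^ 2) ∂m) / ε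
        + (h + (1 + 1 / ε) * ∫ z, min 1 z ∂ν)) * B := by
  have hB := hF.const_nonneg
  set Nm := |β| + σ ^ 2 / 2 + (1 + 1 / ε) * ∫ z, min 1 (z ^ 2) ∂m
  set Nn := h + (1 + 1 / ε) * ∫ z, min 1 z ∂ν
  have : 0 ≤ Nm := add_nonneg (by positivity)
    (mul_nonneg (by positivity) (integral_nonneg fun z ↦ by positivity))
  have : 0 ≤ Nn := add_nonneg hψ.h_nonneg (mul_nonneg (by positivity) (integral_nonneg_of_ae <| by
    filter_upwards [hψ.ae_pos] with z hz using le_min zero_le_one hz.le))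
  calc |cbiGenerator β σ h m ν F y|
      ≤ y * |branchingGenerator β σ m F y| + |immigrationGenerator h ν F y| := by
        rw [← abs_of_nonneg hy, ← abs_mul, abs_of_nonneg hy]
        exact abs_add_le _ _
    _ ≤ y * (Nm * B * Real.exp (-(ε * y))) + Nn * B * Real.exp (-(ε * y)) := by
        gcongr
        exacts [hF.abs_branchingGenerator_le hε hφ hy, hF.abs_immigrationGenerator_le hε hψ hy]
    _ = Nm * B * (y * Real.exp (-(ε * y))) + Nn * B * Real.exp (-(ε * y)) := by ring
    _ ≤ Nm * B * (1 / ε) + Nn * B * 1 := by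
        gcongr
        exacts [mul_exp_neg_mul_le hε y, exp_neg_mul_le_one hε.le hy]
    _ = _ := by ring

lemma cbiGenerator_add (hF : HasExpDecay F ε B) (hF' : HasExpDecay F' ε B')
    (hφ : IsBranchingMechanism φ β σ m) (hψ : IsImmigrationMechanism ψ h ν) {y : ℝ}
    (hy : 0 ≤ y) : cbiGenerator β σ h m ν (fun y ↦ F y + F' y) y =
      cbiGenerator β σ h m ν F y + cbiGenerator β σ h m ν F' y := by
  have hd := deriv_fun_add_of_contDiff_two hF.contDiff hF'.contDiff
  have hdd := deriv_deriv_fun_add_of_contDiff_two hF.contDiff hF'.contDiff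
  have hm : ∫ z, compensatedIncrement (fun y ↦ F y + F' y) y z ∂m =
      ∫ z, compensatedIncrement F y z ∂m + ∫ z, compensatedIncrement F' y z ∂m := by
    rw [← integral_add (hF.integrable_compensatedIncrement hε hφ hy)
      (hF'.integrable_compensatedIncrement hε hφ hy)]
    refine integral_congr_ae (.of_forall fun z ↦ ?_)
    simp only [compensatedIncrement, hd]
    split_ifs <;> ring
  have hn : ∫ z, (F (y + z) + F' (y + z) - (F y + F' y)) ∂ν =
      ∫ z, (F (y + z) - F y) ∂ν + ∫ z, (F' (y + z) - F' y) ∂ν := by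
    rw [← integral_add (hF.integrable_increment hε hψ hy) (hF'.integrable_increment hε hψ hy)]
    exact integral_congr_ae (.of_forall fun z ↦ by ring)
  unfold cbiGenerator branchingGenerator immigrationGenerator
  rw [hm, hn, hdd, hd]
  ring

end Generator

end HasExpDecay

/-- The function `g` in the variable `exp (-ε y)`. If `g` is a polynomial, this is a linear
combination of the functions `exp (-n ε y)`, whose expectations the Laplace transform gives. -/
def expLift (g : ℝ → ℝ) (ε y : ℝ) : ℝ := g (Real.exp (-(ε * y)))

section ExpLift

variable {g : ℝ → ℝ} {ε B : ℝ}

lemma hasDerivAt_expLift {g' y : ℝ} (hg : HasDerivAt g g' (Real.exp (-(ε * y)))) :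
    HasDerivAt (expLift g ε) (-(ε * Real.exp (-(ε * y)) * g')) y := by
  refine (hg.comp y ((hasDerivAt_id' y).const_mul ε).fun_neg.exp).congr_deriv ?_
  ring

lemma contDiff_expLift (hg : ContDiff ℝ 2 g) : ContDiff ℝ 2 (expLift g ε) :=
  hg.comp (contDiff_const.mul contDiff_id).neg.exp

lemma deriv_expLift (hg : ContDiff ℝ 2 g) : deriv (expLift g ε) =
    fun y ↦ -(ε * Real.exp (-(ε * y)) * deriv g (Real.exp (-(ε * y)))) :=
  funext fun _ ↦ (hasDerivAt_expLift (differentiable_of_contDiff_two hg _).hasDerivAt).deriv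

lemma deriv_deriv_expLift (hg : ContDiff ℝ 2 g) : deriv (deriv (expLift g ε)) =
    fun y ↦ ε ^ 2 * Real.exp (-(ε * y)) * deriv g (Real.exp (-(ε * y))) +
      ε ^ 2 * Real.exp (-(ε * y)) ^ 2 * deriv (deriv g) (Real.exp (-(ε * y))) := by
  rw [deriv_expLift hg]
  refine funext fun y ↦ HasDerivAt.deriv ?_
  have hu := ((hasDerivAt_id' y).const_mul ε).fun_neg.exp
  have hg' := (differentiable_deriv_of_contDiff_two hg (Real.exp (-(ε * y)))).hasDerivAt
  refine ((hu.const_mul ε).mul (hg'.comp y hu)).neg.congr_deriv ?_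
  simp only [Function.comp_apply]
  ring

lemma hasExpDecay_expLift (hg : ContDiff ℝ 2 g) (hε : 0 ≤ ε)
    (hB : ∀ u ∈ Icc (0 : ℝ) 1, |deriv g u| ≤ B ∧ |deriv (deriv g) u| ≤ B) :
    HasExpDecay (expLift g ε) ε ((ε + 2 * ε ^ 2) * B) := by
  have hB0 : 0 ≤ B := (abs_nonneg _).trans (hB 0 (left_mem_Icc.2 zero_le_one)).1
  refine ⟨contDiff_expLift hg, fun y hy ↦ ?_, fun y hy ↦ ?_⟩
  · have hE := exp_neg_mul_mem_Icc hε hy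
    rw [deriv_expLift hg, abs_neg, abs_mul, abs_of_nonneg (mul_nonneg hε hE.1)]
    calc ε * Real.exp (-(ε * y)) * |deriv g (Real.exp (-(ε * y)))|
        ≤ ε * Real.exp (-(ε * y)) * B := by gcongr; exact (hB _ hE).1
      _ ≤ _ := by nlinarith [mul_nonneg (mul_nonneg (sq_nonneg ε) hB0) hE.1]
  · have hE := exp_neg_mul_mem_Icc hε hy
    have hg1 := (hB _ hE).1
    have hg2 := (hB _ hE).2
    simp only [deriv_deriv_expLift hg]
    set E := Real.exp (-(ε * y))
    refine (abs_add_le _ _).trans ?_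
    rw [abs_mul, abs_mul _ (deriv _ E), abs_of_nonneg (mul_nonneg (sq_nonneg ε) hE.1),
      abs_of_nonneg (mul_nonneg (sq_nonneg ε) (sq_nonneg E))]
    calc ε ^ 2 * E * |deriv g E| + ε ^ 2 * E ^ 2 * |deriv (deriv g) E|
        ≤ ε ^ 2 * E * B + ε ^ 2 * E * B := by
          gcongr
          exact pow_le_of_le_one hE.1 hE.2 two_ne_zero
      _ ≤ _ := by nlinarith [mul_nonneg (mul_nonneg hε hB0) hE.1]

lemma exists_hasExpDecay_expLift (hg : ContDiff ℝ 2 g) (hε : 0 ≤ ε) :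
    ∃ B, HasExpDecay (expLift g ε) ε B := by
  obtain ⟨C, hC⟩ := (isCompact_Icc (a := (0 : ℝ)) (b := 1)).exists_bound_of_continuousOn
    (contDiff_one_deriv hg).continuous.continuousOn
  obtain ⟨C', hC'⟩ := (isCompact_Icc (a := (0 : ℝ)) (b := 1)).exists_bound_of_continuousOn
    (continuous_deriv_deriv_of_contDiff_two hg).continuousOn
  exact ⟨_, hasExpDecay_expLift hg hε (B := max C C') fun u hu ↦
    ⟨(hC u hu).trans (le_max_left _ _), (hC' u hu).trans (le_max_right _ _)⟩⟩

end ExpLift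

section Polynomial

open Polynomial

lemma contDiff_eval (p : ℝ[X]) : ContDiff ℝ 2 p.eval := by
  simpa using p.contDiff_aeval (𝕜 := ℝ) 2

lemma exists_derivative_eq_eval_zero_eq (q : ℝ[X]) (a : ℝ) :
    ∃ p : ℝ[X], p.derivative = q ∧ p.eval 0 = a := by
  suffices ∃ p : ℝ[X], p.derivative = q by
    obtain ⟨p, rfl⟩ := this
    exact ⟨p + C (a - p.eval 0), by simp, by simp⟩
  induction q using Polynomial.induction_on' with
  | add p q hp hq =>
    obtain ⟨p', rfl⟩ := hp
    obtain ⟨q', rfl⟩ := hq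
    exact ⟨p' + q', derivative_add⟩
  | monomial n a =>
    refine ⟨monomial (n + 1) (a / (n + 1)), ?_⟩
    rw [derivative_monomial, Nat.add_sub_cancel, Nat.cast_succ, div_mul_cancel₀ _ (by positivity)]

lemma abs_le_of_abs_deriv_le {r : ℝ → ℝ} (hr : Differentiable ℝ r) (h0 : r 0 = 0) {η : ℝ}
    (hη : ∀ u ∈ Icc (0 : ℝ) 1, |deriv r u| ≤ η) {u : ℝ} (hu : u ∈ Icc (0 : ℝ) 1) : |r u| ≤ η := by
  have hη0 : 0 ≤ η := (abs_nonneg _).trans (hη u hu)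
  have := (convex_Icc (0 : ℝ) 1).norm_image_sub_le_of_norm_deriv_le (fun w _ ↦ hr w) hη
    (left_mem_Icc.2 zero_le_one) hu
  rw [h0, sub_zero, sub_zero, Real.norm_eq_abs, Real.norm_of_nonneg hu.1] at this
  exact this.trans (mul_le_of_le_one_right hη0 hu.2)

lemma exists_polynomial_near_of_contDiff_two {g : ℝ → ℝ} (hg : ContDiff ℝ 2 g) {η : ℝ}
    (hη : 0 < η) : ∃ p : ℝ[X], ∀ u ∈ Icc (0 : ℝ) 1, |g u - p.eval u| ≤ η ∧
      |deriv (fun u ↦ g u - p.eval u) u| ≤ η ∧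
      |deriv (deriv fun u ↦ g u - p.eval u) u| ≤ η := by
  obtain ⟨q, hq⟩ := exists_polynomial_near_of_continuousOn 0 1 _
    (continuous_deriv_deriv_of_contDiff_two hg).continuousOn η hη
  obtain ⟨p', rfl, hp'⟩ := exists_derivative_eq_eval_zero_eq q (deriv g 0)
  obtain ⟨p, rfl, hp⟩ := exists_derivative_eq_eval_zero_eq p' (g 0)
  have hd : deriv (fun u ↦ g u - p.eval u) = fun u ↦ deriv g u - p.derivative.eval u :=
    funext fun u ↦ ((differentiable_of_contDiff_two hg u).hasDerivAt.sub (p.hasDerivAt u)).deriv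
  have hdd : deriv (fun u ↦ deriv g u - p.derivative.eval u) =
      fun u ↦ deriv (deriv g) u - p.derivative.derivative.eval u :=
    funext fun u ↦ ((differentiable_deriv_of_contDiff_two hg u).hasDerivAt.sub
      (p.derivative.hasDerivAt u)).deriv
  have h2 (u : ℝ) (hu : u ∈ Icc (0 : ℝ) 1) :
      |deriv (fun u ↦ deriv g u - p.derivative.eval u) u| ≤ η := by
    rw [hdd, abs_sub_comm]
    exact (hq u hu).le
  have h1 (u : ℝ) (hu : u ∈ Icc (0 : ℝ) 1) : |deriv (fun u ↦ g u - p.eval u) u| ≤ η := by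
    rw [hd]
    exact abs_le_of_abs_deriv_le ((differentiable_deriv_of_contDiff_two hg).sub
      p.derivative.differentiable) (sub_eq_zero.2 hp'.symm) h2 hu
  refine ⟨p, fun u hu ↦ ⟨?_, h1 u hu, by rw [hd]; exact h2 u hu⟩⟩
  exact abs_le_of_abs_deriv_le ((differentiable_of_contDiff_two hg).sub p.differentiable)
    (sub_eq_zero.2 hp.symm) h1 hu

end Polynomial

section CBI

variable {φ ψ : ℝ → ℝ} {β σ h : ℝ} {m ν : Measure ℝ} {v : ℝ → ℝ → ℝ} {Q : ℝ → ℝ → Measure ℝ}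
  {x ε : ℝ}

lemma cbiGenerator_const (a : ℝ) : cbiGenerator β σ h m ν (fun _ ↦ a) = fun _ ↦ 0 := by
  funext y
  simp [cbiGenerator, branchingGenerator, immigrationGenerator, compensatedIncrement]

lemma cbiGenerator_const_mul_exp (hφ : IsBranchingMechanism φ β σ m)
    (hψ : IsImmigrationMechanism ψ h ν) (a : ℝ) {l : ℝ} (hl : 0 ≤ l) (y : ℝ) :
    cbiGenerator β σ h m ν (fun y ↦ a * Real.exp (-(l * y))) y =
      a * ((φ l * y - ψ l) * Real.exp (-(l * y))) := by
  have hd (a : ℝ) : deriv (fun y ↦ a * Real.exp (-(l * y))) =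
      fun y ↦ -(l * a) * Real.exp (-(l * y)) := funext fun y ↦
    ((((hasDerivAt_id' y).const_mul l).fun_neg.exp.const_mul a).congr_deriv (by ring)).deriv
  have hm : ∫ z, compensatedIncrement (fun y ↦ a * Real.exp (-(l * y))) y z ∂m =
      a * Real.exp (-(l * y)) * ∫ z, compensatedExp z l ∂m := by
    rw [← integral_const_mul]
    refine integral_congr_ae (.of_forall fun z ↦ ?_)
    simp only [compensatedIncrement, hd, compensatedExp, mul_add, neg_add, Real.exp_add,
      mul_comm l z]
    split_ifs <;> ring
  have hn : ∫ z, (a * Real.exp (-(l * (y + z))) - a * Real.exp (-(l * y))) ∂ν =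
      -(a * Real.exp (-(l * y))) * ∫ z, (1 - Real.exp (-(l * z))) ∂ν := by
    rw [← integral_const_mul]
    refine integral_congr_ae (.of_forall fun z ↦ ?_)
    simp only [mul_add, neg_add, Real.exp_add]
    ring
  unfold cbiGenerator branchingGenerator immigrationGenerator
  rw [hm, hn, hd, hd, hφ.eqOn hl, hψ.form l hl]
  ring

section ForwardEquation

variable (hφ : IsBranchingMechanism φ β σ m) (hψ : IsImmigrationMechanism ψ h ν)
  (hv : IsCumulant φ v) (hQ : IsCBISemigroup v ψ Q) (hx : 0 ≤ x) (hε : 0 < ε)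

include hφ hψ hv hQ hx hε

open Polynomial in
lemma forwardEquation_expLift_polynomial (p : ℝ[X]) :
    ForwardEquation (Q · x) x (expLift p.eval ε) (cbiGenerator β σ h m ν (expLift p.eval ε)) := by
  have hq0 (t : ℝ) (ht : 0 ≤ t) := (hQ t x ht hx).2.1
  induction p using Polynomial.induction_on' with
  | add p q hp hq =>
    obtain ⟨B, hB⟩ := exists_hasExpDecay_expLift (contDiff_eval p) hε.le
    obtain ⟨B', hB'⟩ := exists_hasExpDecay_expLift (contDiff_eval q) hε.le
    have hadd : expLift (p + q).eval ε = fun y ↦ expLift p.eval ε y + expLift q.eval ε y :=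
      funext fun y ↦ eval_add
    rw [hadd]
    exact (hp.add hq).congr_gen hq0 fun y hy ↦ (hB.cbiGenerator_add hε hB' hφ hψ hy).symm
  | monomial n a =>
    have hexp : expLift (monomial n a).eval ε = fun y ↦ a * Real.exp (-(n * ε * y)) := by
      funext y
      rw [expLift, eval_monomial, ← Real.exp_nat_mul, mul_neg, mul_assoc]
    rw [hexp]
    rcases n.eq_zero_or_pos with rfl | hn
    · simp only [Nat.cast_zero, zero_mul, neg_zero, Real.exp_zero, mul_one]
      rw [cbiGenerator_const]
      exact .const (fun t ht ↦ (hQ t x ht hx).1) a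
    · have hl : 0 < n * ε := by positivity
      exact ((forwardEquation_exp hφ hψ hv hQ hx hl).const_mul a).congr_gen hq0
        fun y _ ↦ (cbiGenerator_const_mul_exp hφ hψ a hl.le y).symm

lemma forwardEquation_expLift {g : ℝ → ℝ} (hg : ContDiff ℝ 2 g) :
    ForwardEquation (Q · x) x (expLift g ε) (cbiGenerator β σ h m ν (expLift g ε)) := by
  have := hφ.sigmaFinite
  have := hψ.sigmaFinite
  obtain ⟨K, hK⟩ : ∃ K, ∀ F B, HasExpDecay F ε B → ∀ y, 0 ≤ y →
      |cbiGenerator β σ h m ν F y| ≤ K * B :=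
    ⟨_, fun F B hF y hy ↦ hF.abs_cbiGenerator_le hε hφ hψ hy⟩
  refine .of_forall_exists_abs_sub_le (fun t ht ↦ (hQ t x ht hx).2.1)
    (fun t ht ↦ (hQ t x ht hx).1) hx (contDiff_expLift hg).continuous.measurable
    (measurable_cbiGenerator (contDiff_expLift hg) ..) fun η hη ↦ ?_
  set c := |K| * (ε + 2 * ε ^ 2)
  have hc : 0 ≤ c := by positivity
  obtain ⟨p, hp⟩ := exists_polynomial_near_of_contDiff_two hg
    (div_pos hη (by positivity : 0 < 1 + c))
  have hpc := contDiff_eval p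
  have hdecay := hasExpDecay_expLift (hg.sub hpc) hε.le fun u hu ↦ (hp u hu).2
  obtain ⟨B, hB⟩ := exists_hasExpDecay_expLift hpc hε.le
  refine ⟨expLift p.eval ε, cbiGenerator β σ h m ν (expLift p.eval ε),
    (contDiff_expLift hpc).continuous.measurable, measurable_cbiGenerator (contDiff_expLift hpc) ..,
    forwardEquation_expLift_polynomial hφ hψ hv hQ hx hε p, fun y hy ↦ ?_, fun y hy ↦ ?_⟩
  · refine ((hp _ (exp_neg_mul_mem_Icc hε.le hy)).1).trans (div_le_self hη.le (by linarith))
  · have hsplit := hdecay.cbiGenerator_add hε hB hφ hψ hy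
    rw [show (fun y ↦ expLift (fun u ↦ g u - p.eval u) ε y + expLift p.eval ε y) = expLift g ε from
      funext fun y ↦ sub_add_cancel _ _] at hsplit
    rw [hsplit, add_sub_cancel_right]
    calc |cbiGenerator β σ h m ν (expLift (fun u ↦ g u - p.eval u) ε) y|
        ≤ K * ((ε + 2 * ε ^ 2) * (η / (1 + c))) := hK _ _ hdecay y hy
      _ ≤ |K| * ((ε + 2 * ε ^ 2) * (η / (1 + c))) := by gcongr; exact le_abs_self K
      _ = c * η / (1 + c) := by ring
      _ ≤ η := by
        rw [div_le_iff₀ (by positivity)]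
        nlinarith

end ForwardEquation

end CBI

/-! ### The generator on truncated weights -/

namespace IsSmoothWeight

variable {G : ℝ → ℝ} {D : ℝ} (hG : IsSmoothWeight G D)

include hG

lemma pos (x : ℝ) : 0 < G x := zero_lt_one.trans_le (hG.one_le x)

lemma differentiable : Differentiable ℝ G := differentiable_of_contDiff_two hG.contDiff

lemma monotone : Monotone G := monotone_of_deriv_nonneg hG.differentiable hG.deriv_nonneg

lemma monotone_deriv : Monotone (deriv G) :=
  monotone_of_deriv_nonneg (differentiable_deriv_of_contDiff_two hG.contDiff) hG.deriv2_nonneg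

lemma one_le_constant : 1 ≤ D := by
  nlinarith [hG.doubling 0 le_rfl, hG.one_le 0, hG.monotone (by norm_num : (0 : ℝ) ≤ 2 * 0 + 2)]

lemma le_mul_of_le_two_mul_add_two {a x : ℝ} (ha : 0 ≤ a) (hx : x ≤ 2 * a + 2) :
    G x ≤ D * G a :=
  (hG.monotone hx).trans (hG.doubling a ha)

lemma increment_mul_le {a c e : ℝ} (he : e ∈ Icc (0 : ℝ) 1) :
    G (a + e * c) - G a ≤ e * (G (a + c) - G a) := by
  have hconv := (hG.monotone_deriv.convexOn_univ_of_deriv hG.differentiable).2 (mem_univ a)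
    (mem_univ (a + c)) (sub_nonneg.2 he.2) he.1 (by ring)
  simp only [smul_eq_mul] at hconv
  rw [show (1 - e) * a + e * (a + c) = a + e * c by ring] at hconv
  linarith

lemma increment_le_of_deriv_le {a b C : ℝ} (hb : 0 ≤ b) (hC : deriv G (a + b) ≤ C) :
    G (a + b) - G a ≤ C * b := by
  have hmvt := (convex_Icc a (a + b)).norm_image_sub_le_of_norm_deriv_le (C := C)
    (fun x _ ↦ hG.differentiable x) (fun x hx ↦ by
      rw [Real.norm_of_nonneg (hG.deriv_nonneg x)]
      exact (hG.monotone_deriv hx.2).trans hC)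
    (left_mem_Icc.2 (by linarith)) (right_mem_Icc.2 (by linarith))
  rw [add_sub_cancel_left, Real.norm_of_nonneg hb] at hmvt
  exact (le_abs_self _).trans hmvt

lemma small_increment_le {a b : ℝ} (ha : 0 ≤ a) (hb : b ∈ Icc (0 : ℝ) 1) :
    G (a + b) - G a ≤ D ^ 2 * G a * b := by
  refine hG.increment_le_of_deriv_le hb.1 ?_
  have hab : 0 ≤ a + b := add_nonneg ha hb.1
  calc deriv G (a + b) ≤ (1 + (a + b)) * deriv G (a + b) :=
        le_mul_of_one_le_left (hG.deriv_nonneg _) (by linarith)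
    _ ≤ D * G (a + b) := hG.deriv_le _ hab
    _ ≤ D * (D * G a) := by
      gcongr
      · linarith [hG.one_le_constant]
      · exact hG.le_mul_of_le_two_mul_add_two ha (by linarith [hb.2])
    _ = D ^ 2 * G a := by ring

lemma one_add_mul_abs_sub_sub_mul_deriv_le {a b : ℝ} (ha : 0 ≤ a) (hb : b ∈ Icc (0 : ℝ) 1) :
    (1 + a) * |G (a + b) - G a - b * deriv G a| ≤ D ^ 2 * G a * b ^ 2 := by
  have ha' : 0 < 1 + a := by linarith
  have htaylor := abs_sub_sub_mul_deriv_le hG.contDiff (C := D ^ 2 * G a / (1 + a)) hb.1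
    fun w hw ↦ by
      rw [abs_of_nonneg (hG.deriv2_nonneg w), le_div_iff₀' ha']
      calc (1 + a) * deriv (deriv G) w ≤ (1 + w) * deriv (deriv G) w :=
            mul_le_mul_of_nonneg_right (by linarith [hw.1]) (hG.deriv2_nonneg w)
        _ ≤ D * G w := hG.deriv2_le w (ha.trans hw.1)
        _ ≤ D * (D * G a) := by
          gcongr
          · linarith [hG.one_le_constant]
          · exact hG.le_mul_of_le_two_mul_add_two ha (by linarith [hw.2, hb.2])
        _ = D ^ 2 * G a := by ring
  rwa [div_mul_eq_mul_div, le_div_iff₀' ha'] at htaylor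

lemma mul_increment_le {a z : ℝ} (ha : 0 ≤ a) (hz : 0 ≤ z) :
    a * (G (a + z) - G a) ≤ D ^ 3 * G a * G z := by
  have hD := hG.one_le_constant
  have hGa := hG.one_le a
  have hGz := hG.one_le z
  rcases le_total z a with hza | haz
  · have hdouble : a * deriv G (2 * a) ≤ D * (D * G a) := calc
      a * deriv G (2 * a) ≤ (1 + 2 * a) * deriv G (2 * a) :=
        mul_le_mul_of_nonneg_right (by linarith) (hG.deriv_nonneg _)
      _ ≤ D * G (2 * a) := hG.deriv_le _ (by linarith)
      _ ≤ D * (D * G a) := by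
        gcongr
        exact hG.le_mul_of_le_two_mul_add_two ha (by linarith)
    calc a * (G (a + z) - G a) ≤ a * (deriv G (2 * a) * z) := by
          gcongr
          exact hG.increment_le_of_deriv_le hz (hG.monotone_deriv (by linarith))
      _ = a * deriv G (2 * a) * z := by ring
      _ ≤ D * (D * G a) * (D * G z) := by
        gcongr
        exact hG.self_le z hz
      _ = D ^ 3 * G a * G z := by ring
  · calc a * (G (a + z) - G a) ≤ D * G a * (D * G z) := by
          gcongr
          · exact sub_nonneg.2 (hG.monotone (by linarith))
          · exact hG.self_le a ha
          · linarith [hG.le_mul_of_le_two_mul_add_two hz (by linarith : a + z ≤ 2 * z + 2)]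
      _ = D ^ 2 * (G a * G z) := by ring
      _ ≤ D ^ 3 * (G a * G z) := by gcongr; norm_num
      _ = D ^ 3 * G a * G z := by ring

lemma increment_le_mul {a : ℝ} (ha : 0 ≤ a) (z : ℝ) :
    G (a + z) - G a ≤ D ^ 3 * G a * G z := by
  have hD := hG.one_le_constant
  have hGa := hG.one_le a
  have hGz := hG.one_le z
  have hmax : G (a + z) ≤ D * max (G a) (G z) := by
    rw [← hG.monotone.map_max]
    exact hG.le_mul_of_le_two_mul_add_two (le_max_of_le_left ha)
      (by linarith [le_max_left a z, le_max_right a z])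
  calc G (a + z) - G a ≤ D * max (G a) (G z) := by linarith
    _ ≤ D ^ 3 * (G a * G z) := by
      gcongr
      · exact le_self_pow₀ hD (by norm_num)
      · exact max_le (le_mul_of_one_le_right (by linarith) hGz)
          (le_mul_of_one_le_left (by linarith) hGa)
    _ = D ^ 3 * G a * G z := by ring

end IsSmoothWeight

/-- A smooth truncation of the identity of `[0, ∞)` at height `1 / ε`, increasing to the identity
as `ε → 0`. Being affine in `exp (-ε y)`, it turns every function into one of the form `expLift`. -/
def truncation (ε y : ℝ) : ℝ := (1 - Real.exp (-(ε * y))) / ε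

section Truncation

variable {ε y z : ℝ}

@[fun_prop]
lemma continuous_truncation : Continuous (truncation ε) := by
  unfold truncation
  fun_prop

lemma hasDerivAt_truncation (hε : ε ≠ 0) (y : ℝ) :
    HasDerivAt (truncation ε) (Real.exp (-(ε * y))) y := by
  refine ((((hasDerivAt_id' y).const_mul ε).fun_neg.exp.const_sub 1).div_const ε).congr_deriv ?_
  field_simp

lemma truncation_add (ε y z : ℝ) :
    truncation ε (y + z) = truncation ε y + Real.exp (-(ε * y)) * truncation ε z := by
  unfold truncation
  rw [mul_add, neg_add, Real.exp_add]
  ring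

variable (hε : 0 < ε)

include hε

lemma monotone_truncation : Monotone (truncation ε) := fun y z hyz ↦ by
  unfold truncation
  gcongr

lemma truncation_nonneg (hy : 0 ≤ y) : 0 ≤ truncation ε y := by
  simpa [truncation] using monotone_truncation hε hy

lemma truncation_le_self (y : ℝ) : truncation ε y ≤ y := by
  rw [truncation, div_le_iff₀ hε]
  linarith [Real.add_one_le_exp (-(ε * y))]

lemma truncation_le_one_div (y : ℝ) : truncation ε y ≤ 1 / ε := by
  unfold truncation
  gcongr
  linarith [Real.exp_pos (-(ε * y))]

lemma mul_exp_le_truncation (y : ℝ) : y * Real.exp (-(ε * y)) ≤ truncation ε y := by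
  have hinv : Real.exp (-(ε * y)) * Real.exp (ε * y) = 1 := by rw [← Real.exp_add]; simp
  rw [truncation, le_div_iff₀ hε]
  nlinarith [Real.add_one_le_exp (ε * y), Real.exp_pos (-(ε * y))]

lemma mul_exp_mul_mem_Icc {d C : ℝ} (hy : 0 ≤ y) (hd : 0 ≤ d)
    (hC : (1 + truncation ε y) * d ≤ C) : y * Real.exp (-(ε * y)) * d ∈ Icc 0 C := by
  refine ⟨by positivity, le_trans ?_ hC⟩
  exact mul_le_mul_of_nonneg_right (by linarith [mul_exp_le_truncation hε y]) hd

lemma sub_truncation_le_sq (hε1 : ε ≤ 1) (hz : 0 ≤ z) : z - truncation ε z ≤ z ^ 2 := by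
  have hquad := exp_neg_sub_one_add_le_sq (mul_nonneg hε.le hz)
  have : z - z ^ 2 ≤ truncation ε z := by
    rw [truncation, le_div_iff₀ hε]
    nlinarith [mul_nonneg hε.le (sq_nonneg z)]
  linarith

end Truncation

section TruncatedWeight

variable {G : ℝ → ℝ} {D ε : ℝ}

lemma comp_truncation_eq_expLift (G : ℝ → ℝ) (ε : ℝ) :
    G ∘ truncation ε = expLift (fun u ↦ G ((1 - u) / ε)) ε := rfl

lemma deriv_comp_truncation (hG : ContDiff ℝ 2 G) (hε : ε ≠ 0) :
    deriv (G ∘ truncation ε) = fun y ↦ Real.exp (-(ε * y)) * deriv G (truncation ε y) :=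
  funext fun y ↦ ((differentiable_of_contDiff_two hG _).hasDerivAt.comp y
    (hasDerivAt_truncation hε y)).deriv.trans (mul_comm _ _)

lemma deriv_deriv_comp_truncation (hG : ContDiff ℝ 2 G) (hε : ε ≠ 0) :
    deriv (deriv (G ∘ truncation ε)) = fun y ↦
      Real.exp (-(ε * y)) ^ 2 * deriv (deriv G) (truncation ε y) -
        ε * Real.exp (-(ε * y)) * deriv G (truncation ε y) := by
  rw [deriv_comp_truncation hG hε]
  refine funext fun y ↦ HasDerivAt.deriv ?_
  have hexp := ((hasDerivAt_id' y).const_mul ε).fun_neg.exp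
  refine (hexp.mul ((differentiable_deriv_of_contDiff_two hG _).hasDerivAt.comp y
    (hasDerivAt_truncation hε y))).congr_deriv ?_
  simp only [Function.comp_apply]
  ring

lemma exists_hasExpDecay_comp_truncation (hG : ContDiff ℝ 2 G) (hε : 0 ≤ ε) :
    ∃ B, HasExpDecay (G ∘ truncation ε) ε B :=
  exists_hasExpDecay_expLift (hG.comp ((contDiff_const.sub contDiff_id).div_const ε)) hε

end TruncatedWeight

namespace IsSmoothWeight

variable {G : ℝ → ℝ} {D ε y z : ℝ} (hG : IsSmoothWeight G D) (hε : 0 < ε) (hy : 0 ≤ y)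

include hG hε

lemma monotone_comp_truncation : Monotone (G ∘ truncation ε) :=
  hG.monotone.comp (monotone_truncation hε)

lemma deriv_comp_truncation_nonneg (y : ℝ) : 0 ≤ deriv (G ∘ truncation ε) y := by
  rw [deriv_comp_truncation hG.contDiff hε.ne']
  exact mul_nonneg (Real.exp_pos _).le (hG.deriv_nonneg _)

include hy

lemma deriv_comp_truncation_le : deriv (G ∘ truncation ε) y ≤ D * (G ∘ truncation ε) y := by
  rw [deriv_comp_truncation hG.contDiff hε.ne']
  have hT := truncation_nonneg hε hy
  calc Real.exp (-(ε * y)) * deriv G (truncation ε y)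
      ≤ (1 + truncation ε y) * deriv G (truncation ε y) :=
        mul_le_mul_of_nonneg_right (by linarith [exp_neg_mul_le_one hε.le hy])
          (hG.deriv_nonneg _)
    _ ≤ D * G (truncation ε y) := hG.deriv_le _ hT

lemma mul_deriv_comp_truncation_le :
    y * deriv (G ∘ truncation ε) y ≤ D * (G ∘ truncation ε) y := by
  rw [deriv_comp_truncation hG.contDiff hε.ne', ← mul_assoc]
  exact (mul_exp_mul_mem_Icc hε hy (hG.deriv_nonneg _)
    (hG.deriv_le _ (truncation_nonneg hε hy))).2

lemma abs_mul_deriv2_comp_truncation_le (hε1 : ε ≤ 1) :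
    |y * deriv (deriv (G ∘ truncation ε)) y| ≤ D * (G ∘ truncation ε) y := by
  have hT := truncation_nonneg hε hy
  have hfirst := mul_exp_mul_mem_Icc hε hy (hG.deriv_nonneg _) (hG.deriv_le _ hT)
  have hsecond := mul_exp_mul_mem_Icc hε hy (hG.deriv2_nonneg _) (hG.deriv2_le _ hT)
  have hE := exp_neg_mul_mem_Icc hε.le hy
  rw [deriv_deriv_comp_truncation hG.contDiff hε.ne', Function.comp_apply]
  set E := Real.exp (-(ε * y))
  set T := truncation ε y
  rw [show y * (E ^ 2 * deriv (deriv G) T - ε * E * deriv G T) =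
    E * (y * E * deriv (deriv G) T) - ε * (y * E * deriv G T) by ring]
  exact abs_sub_le_of_nonneg_of_le (mul_nonneg hE.1 hsecond.1)
    ((mul_le_of_le_one_left hsecond.1 hE.2).trans hsecond.2) (mul_nonneg hε.le hfirst.1)
    ((mul_le_of_le_one_left hfirst.1 hε1).trans hfirst.2)

lemma abs_mul_taylor_comp_truncation_le {c : ℝ} (hc : c ∈ Icc (0 : ℝ) 1) :
    |y * (G (truncation ε y + Real.exp (-(ε * y)) * c) - G (truncation ε y) -
      Real.exp (-(ε * y)) * c * deriv G (truncation ε y))| ≤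
      D ^ 2 * G (truncation ε y) * c ^ 2 := by
  have hT := truncation_nonneg hε hy
  have hE := exp_neg_mul_mem_Icc hε.le hy
  have hE0 := Real.exp_pos (-(ε * y))
  have hyE := mul_exp_le_truncation hε y
  have hGT := hG.pos (truncation ε y)
  set E := Real.exp (-(ε * y))
  set T := truncation ε y
  have hb : E * c ∈ Icc (0 : ℝ) 1 := ⟨mul_nonneg hE.1 hc.1, mul_le_one₀ hE.2 hc.1 hc.2⟩
  set X := G (T + E * c) - G T - E * c * deriv G T
  refine le_of_mul_le_mul_left ?_ hE0
  calc E * |y * X| = y * E * |X| := by rw [abs_mul, abs_of_nonneg hy]; ring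
    _ ≤ (1 + T) * |X| := by gcongr; linarith
    _ ≤ D ^ 2 * G T * (E * c) ^ 2 := hG.one_add_mul_abs_sub_sub_mul_deriv_le hT hb
    _ = D ^ 2 * G T * (E * (E * c ^ 2)) := by ring
    _ ≤ D ^ 2 * G T * (E * (1 * c ^ 2)) := by gcongr; exact hE.2
    _ = E * (D ^ 2 * G T * c ^ 2) := by ring

lemma abs_mul_compensatedIncrement_le (hε1 : ε ≤ 1) (hz : z ∈ Icc (0 : ℝ) 1) :
    |y * compensatedIncrement (G ∘ truncation ε) y z| ≤
      D ^ 3 * (G ∘ truncation ε) y * (2 * z ^ 2) := by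
  have hD := hG.one_le_constant
  have hc0 := truncation_nonneg hε hz.1
  have hcz := truncation_le_self hε z
  have hfirst := mul_exp_mul_mem_Icc hε hy (hG.deriv_nonneg _)
    (hG.deriv_le _ (truncation_nonneg hε hy))
  have htaylor := hG.abs_mul_taylor_comp_truncation_le hε hy ⟨hc0, hcz.trans hz.2⟩
  have hGT := (hG.pos (truncation ε y)).le
  simp only [compensatedIncrement, if_pos hz.2, deriv_comp_truncation hG.contDiff hε.ne',
    Function.comp_apply, truncation_add]
  set E := Real.exp (-(ε * y))
  set T := truncation ε y
  set c := truncation ε z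
  have hcompare : |y * E * deriv G T * (z - c)| ≤ D * G T * z ^ 2 := by
    rw [abs_of_nonneg (mul_nonneg hfirst.1 (sub_nonneg.2 hcz))]
    exact mul_le_mul hfirst.2 (sub_truncation_le_sq hε hε1 hz.1) (sub_nonneg.2 hcz)
      (hfirst.1.trans hfirst.2)
  calc |y * (G (T + E * c) - G T - z * (E * deriv G T))|
      = |y * (G (T + E * c) - G T - E * c * deriv G T) - y * E * deriv G T * (z - c)| := by
        congr 1; ring
    _ ≤ D ^ 2 * G T * c ^ 2 + D * G T * z ^ 2 := (abs_sub _ _).trans (add_le_add htaylor hcompare)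
    _ ≤ D ^ 3 * G T * z ^ 2 + D ^ 3 * G T * z ^ 2 := by
      gcongr
      exacts [by norm_num, le_self_pow₀ hD (by norm_num)]
    _ = D ^ 3 * G T * (2 * z ^ 2) := by ring

lemma comp_truncation_increment_le_of_le_one (hz : z ∈ Icc (0 : ℝ) 1) :
    (G ∘ truncation ε) (y + z) - (G ∘ truncation ε) y ≤ D ^ 3 * (G ∘ truncation ε) y * z := by
  have hD := hG.one_le_constant
  have hE := exp_neg_mul_mem_Icc hε.le hy
  have hc0 := truncation_nonneg hε hz.1
  have hGT := (hG.pos (truncation ε y)).le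
  have hEc : Real.exp (-(ε * y)) * truncation ε z ≤ z :=
    (mul_le_of_le_one_left hc0 hE.2).trans (truncation_le_self hε z)
  simp only [Function.comp_apply, truncation_add]
  refine (hG.small_increment_le (truncation_nonneg hε hy)
    ⟨mul_nonneg hE.1 hc0, hEc.trans hz.2⟩).trans ?_
  gcongr
  norm_num

lemma mul_comp_truncation_increment_le (hz : 0 ≤ z) :
    y * ((G ∘ truncation ε) (y + z) - (G ∘ truncation ε) y) ≤
      D ^ 3 * (G ∘ truncation ε) y * G z := by
  have hT := truncation_nonneg hε hy
  have hc0 := truncation_nonneg hε hz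
  simp only [Function.comp_apply, truncation_add]
  set E := Real.exp (-(ε * y))
  set T := truncation ε y
  set c := truncation ε z
  calc y * (G (T + E * c) - G T)
      ≤ y * (E * (G (T + c) - G T)) := by
        gcongr
        exact hG.increment_mul_le (exp_neg_mul_mem_Icc hε.le hy)
    _ = y * E * (G (T + c) - G T) := by ring
    _ ≤ T * (G (T + z) - G T) := by
      gcongr
      · exact sub_nonneg.2 (hG.monotone (by linarith))
      · exact mul_exp_le_truncation hε y
      · exact hG.monotone (by linarith [truncation_le_self hε z])
    _ ≤ D ^ 3 * G T * G z := hG.mul_increment_le hT hz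

lemma comp_truncation_increment_le (hz : 0 ≤ z) :
    (G ∘ truncation ε) (y + z) - (G ∘ truncation ε) y ≤ D ^ 3 * (G ∘ truncation ε) y * G z := by
  refine le_trans ?_ (hG.increment_le_mul (truncation_nonneg hε hy) z)
  refine sub_le_sub_right (hG.monotone ?_) _
  rw [truncation_add]
  linarith [mul_le_of_le_one_left (truncation_nonneg hε hz) (exp_neg_mul_mem_Icc hε.le hy).2,
    truncation_le_self hε z]

end IsSmoothWeight

/-- A function at most `min 1 y`, positive on `(0, b)` and nonpositive beyond `b`, which localizes
the process to `(0, b)`. Being a polynomial in `exp (-y)`, it has an expectation continuous in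
time. -/
def localizer (b y : ℝ) : ℝ := (1 - Real.exp (-y)) * (Real.exp (-y) - Real.exp (-b))

lemma localizer_self (b : ℝ) : localizer b b = 0 := by simp [localizer]

lemma localizer_nonpos {b y : ℝ} (hy : 0 ≤ y) (hby : b ≤ y) : localizer b y ≤ 0 :=
  mul_nonpos_of_nonneg_of_nonpos (one_sub_exp_neg_mem_Icc hy).1
    (sub_nonpos.2 (Real.exp_le_exp.2 (neg_le_neg hby)))

lemma localizer_le {b y : ℝ} (hy : 0 ≤ y) : localizer b y ≤ min 1 y := by
  have hmem := one_sub_exp_neg_mem_Icc hy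
  refine le_trans (mul_le_of_le_one_right hmem.1 ?_) hmem.2
  linarith [Real.exp_pos (-b), hmem.1]

lemma localizer_pos {b y : ℝ} (hy : 0 < y) (hyb : y < b) : 0 < localizer b y :=
  mul_pos (sub_pos.2 (Real.exp_lt_one_iff.2 (by linarith)))
    (sub_pos.2 (Real.exp_lt_exp.2 (by linarith)))

/-- The part of the truncated weight of a jump of size `z` in excess of the weight of `b`. -/
def excessWeight (G : ℝ → ℝ) (ε b z : ℝ) : ℝ := max ((G ∘ truncation ε) z - G b) 0

lemma excessWeight_nonneg (G : ℝ → ℝ) (ε b z : ℝ) : 0 ≤ excessWeight G ε b z := le_max_right _ _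

namespace IsSmoothWeight

variable {G : ℝ → ℝ} {D ε b : ℝ} (hG : IsSmoothWeight G D)

include hG

lemma continuous_excessWeight : Continuous (excessWeight G ε b) := by
  have := hG.contDiff.continuous
  unfold excessWeight
  fun_prop

lemma excessWeight_le (hε : 0 < ε) (b z : ℝ) : excessWeight G ε b z ≤ G (1 / ε) :=
  max_le (by linarith [hG.pos b, hG.monotone (truncation_le_one_div hε z),
    Function.comp_apply (f := G) (g := truncation ε) (x := z)]) (hG.pos _).le

lemma integrableOn_excessWeight (hε : 0 < ε) (b : ℝ) {ρ : Measure ℝ} (hρ : ρ (Ioi 1) < ⊤) :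
    IntegrableOn (excessWeight G ε b) (Ioi 1) ρ := by
  refine Measure.integrableOn_of_bounded hρ.ne
    hG.continuous_excessWeight.aestronglyMeasurable (M := G (1 / ε)) (.of_forall fun z ↦ ?_)
  rw [Real.norm_of_nonneg (excessWeight_nonneg G ε b z)]
  exact hG.excessWeight_le hε b z

lemma localizer_mul_excessWeight_le (hε : 0 < ε) {y z : ℝ} (hy : 0 ≤ y) (hz : 0 ≤ z) :
    localizer b y * excessWeight G ε b z ≤
      min 1 y * ((G ∘ truncation ε) (y + z) - (G ∘ truncation ε) y) := by
  have hmono := hG.monotone_comp_truncation hε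
  have hincr : 0 ≤ (G ∘ truncation ε) (y + z) - (G ∘ truncation ε) y :=
    sub_nonneg.2 (hmono (by linarith))
  have hexcess := excessWeight_nonneg G ε b z
  rcases le_total b y with hby | hyb
  · exact (mul_nonpos_of_nonpos_of_nonneg (localizer_nonpos hy hby) hexcess).trans
      (mul_nonneg (le_min zero_le_one hy) hincr)
  · have hle : excessWeight G ε b z ≤ (G ∘ truncation ε) (y + z) - (G ∘ truncation ε) y :=
      max_le (sub_le_sub (hmono (by linarith))
        (hG.monotone ((truncation_le_self hε y).trans hyb))) hincr
    exact mul_le_mul (localizer_le hy) hle hexcess (le_min zero_le_one hy)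

section Pointwise

variable {y z : ℝ} (hε : 0 < ε) (hy : 0 ≤ y) (hz : 0 < z)

include hε hy hz

lemma mul_compensatedIncrement_le (hε1 : ε ≤ 1) :
    y * compensatedIncrement (G ∘ truncation ε) y z ≤ D ^ 3 * (G ∘ truncation ε) y *
      (2 * min 1 (z ^ 2) + (Ioi 1).indicator G z) := by
  rcases le_or_gt z 1 with hz1 | hz1
  · rw [indicator_of_notMem (notMem_Ioi.2 hz1), add_zero, min_eq_right (pow_le_one₀ hz.le hz1)]
    exact (le_abs_self _).trans (hG.abs_mul_compensatedIncrement_le hε hy hε1 ⟨hz.le, hz1⟩)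
  · have hF := (hG.pos (truncation ε y)).le
    have hD := hG.one_le_constant
    rw [indicator_of_mem (mem_Ioi.2 hz1), compensatedIncrement, if_neg hz1.not_ge, sub_zero]
    refine (hG.mul_comp_truncation_increment_le hε hy hz.le).trans ?_
    rw [Function.comp_apply]
    gcongr
    linarith [show 0 ≤ min 1 (z ^ 2) by positivity]

lemma comp_truncation_increment_le_add :
    (G ∘ truncation ε) (y + z) - (G ∘ truncation ε) y ≤ D ^ 3 * (G ∘ truncation ε) y *
      (min 1 z + (Ioi 1).indicator G z) := by
  rcases le_or_gt z 1 with hz1 | hz1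
  · rw [indicator_of_notMem (notMem_Ioi.2 hz1), add_zero, min_eq_right hz1]
    exact hG.comp_truncation_increment_le_of_le_one hε hy ⟨hz.le, hz1⟩
  · have hF := (hG.pos (truncation ε y)).le
    have hD := hG.one_le_constant
    rw [indicator_of_mem (mem_Ioi.2 hz1)]
    refine (hG.comp_truncation_increment_le hε hy hz.le).trans ?_
    rw [Function.comp_apply]
    gcongr
    linarith [show 0 ≤ min 1 z by positivity]

lemma le_mul_compensatedIncrement (hε1 : ε ≤ 1) :
    -(D ^ 3 * (G ∘ truncation ε) y) * (2 * min 1 (z ^ 2)) +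
        localizer b y * (Ioi 1).indicator (excessWeight G ε b) z ≤
      y * compensatedIncrement (G ∘ truncation ε) y z := by
  rcases le_or_gt z 1 with hz1 | hz1
  · rw [indicator_of_notMem (notMem_Ioi.2 hz1), mul_zero, add_zero,
      min_eq_right (pow_le_one₀ hz.le hz1), neg_mul]
    exact (abs_le.1 (hG.abs_mul_compensatedIncrement_le hε hy hε1 ⟨hz.le, hz1⟩)).1
  · have hF := (hG.pos (truncation ε y)).le
    have hD := hG.one_le_constant
    rw [indicator_of_mem (mem_Ioi.2 hz1), compensatedIncrement, if_neg hz1.not_ge, sub_zero]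
    have hloc := hG.localizer_mul_excessWeight_le (b := b) hε hy hz.le
    have hincr := hG.monotone_comp_truncation hε (by linarith : y ≤ y + z)
    have hcomp : 0 ≤ D ^ 3 * (G ∘ truncation ε) y * (2 * min 1 (z ^ 2)) := by
      rw [Function.comp_apply]
      positivity
    nlinarith [min_le_right 1 y]

lemma localizer_mul_indicator_le_increment :
    localizer b y * (Ioi 1).indicator (excessWeight G ε b) z ≤
      (G ∘ truncation ε) (y + z) - (G ∘ truncation ε) y := by
  have hincr := hG.monotone_comp_truncation hε (by linarith : y ≤ y + z)
  by_cases hz1 : z ∈ Ioi 1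
  · rw [indicator_of_mem hz1]
    exact (hG.localizer_mul_excessWeight_le hε hy hz.le).trans
      (mul_le_of_le_one_left (sub_nonneg.2 hincr) (min_le_left _ _))
  · rw [indicator_of_notMem hz1, mul_zero]
    exact sub_nonneg.2 hincr

end Pointwise

section Generator

variable {φ ψ : ℝ → ℝ} {β σ h : ℝ} {m ν : Measure ℝ}

lemma abs_mul_local_generator_le (hε : 0 < ε) (hε1 : ε ≤ 1) {y : ℝ} (hy : 0 ≤ y) :
    |y * (-β * deriv (G ∘ truncation ε) y + σ ^ 2 / 2 * deriv (deriv (G ∘ truncation ε)) y)| ≤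
      (|β| + σ ^ 2 / 2) * D * (G ∘ truncation ε) y := by
  have hfirst := mul_nonneg hy (hG.deriv_comp_truncation_nonneg hε y)
  calc _ = |-β * (y * deriv (G ∘ truncation ε) y) +
          σ ^ 2 / 2 * (y * deriv (deriv (G ∘ truncation ε)) y)| := by congr 1; ring
    _ ≤ |β| * |y * deriv (G ∘ truncation ε) y| +
        σ ^ 2 / 2 * |y * deriv (deriv (G ∘ truncation ε)) y| := by
      refine (abs_add_le _ _).trans_eq ?_
      rw [abs_mul, abs_mul (σ ^ 2 / 2), abs_neg, abs_of_nonneg (by positivity : 0 ≤ σ ^ 2 / 2)]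
    _ ≤ |β| * (D * (G ∘ truncation ε) y) + σ ^ 2 / 2 * (D * (G ∘ truncation ε) y) := by
      gcongr
      · exact (abs_of_nonneg hfirst).trans_le (hG.mul_deriv_comp_truncation_le hε hy)
      · exact hG.abs_mul_deriv2_comp_truncation_le hε hy hε1
    _ = _ := by ring

variable (hφ : IsBranchingMechanism φ β σ m) (hψ : IsImmigrationMechanism ψ h ν)

include hφ

lemma mul_branchingGenerator_le (hGm : IntegrableOn G (Ioi 1) m) (hε : 0 < ε) (hε1 : ε ≤ 1)
    {y : ℝ} (hy : 0 ≤ y) : y * branchingGenerator β σ m (G ∘ truncation ε) y ≤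
      ((|β| + σ ^ 2 / 2) * D + D ^ 3 * (2 * ∫ z, min 1 (z ^ 2) ∂m + ∫ z in Ioi 1, G z ∂m)) *
        (G ∘ truncation ε) y := by
  obtain ⟨B, hB⟩ := exists_hasExpDecay_comp_truncation hG.contDiff hε.le
  have hmin := hφ.integrable_min_one_sq.const_mul 2
  have hind := hGm.integrable_indicator measurableSet_Ioi
  have hjump : y * ∫ z, compensatedIncrement (G ∘ truncation ε) y z ∂m ≤
      D ^ 3 * (G ∘ truncation ε) y * (2 * ∫ z, min 1 (z ^ 2) ∂m + ∫ z in Ioi 1, G z ∂m) := by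
    rw [← integral_indicator measurableSet_Ioi, ← integral_const_mul, ← integral_const_mul,
      ← integral_add hmin hind, ← integral_const_mul]
    refine integral_mono_ae ((hB.integrable_compensatedIncrement hε hφ hy).const_mul y)
      ((hmin.add hind).const_mul _) ?_
    filter_upwards [hφ.ae_pos] with z hz using hG.mul_compensatedIncrement_le hε hy hz hε1
  have hlocal := (le_abs_self _).trans
    (hG.abs_mul_local_generator_le (β := β) (σ := σ) hε hε1 hy)
  rw [branchingGenerator, mul_add y]
  linear_combination hlocal + hjump

lemma le_mul_branchingGenerator (hε : 0 < ε) (hε1 : ε ≤ 1) (b : ℝ) {y : ℝ} (hy : 0 ≤ y) :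
    -((|β| + σ ^ 2 / 2) * D + D ^ 3 * (2 * ∫ z, min 1 (z ^ 2) ∂m)) * (G ∘ truncation ε) y +
        localizer b y * ∫ z in Ioi 1, excessWeight G ε b z ∂m ≤
      y * branchingGenerator β σ m (G ∘ truncation ε) y := by
  obtain ⟨B, hB⟩ := exists_hasExpDecay_comp_truncation hG.contDiff hε.le
  have hmin := (hφ.integrable_min_one_sq.const_mul 2).const_mul (-(D ^ 3 * (G ∘ truncation ε) y))
  have hind := ((hG.integrableOn_excessWeight hε b hφ.measure_Ioi_one_lt_top).integrable_indicator
    measurableSet_Ioi).const_mul (localizer b y)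
  have hjump : -(D ^ 3 * (G ∘ truncation ε) y) * (2 * ∫ z, min 1 (z ^ 2) ∂m) +
      localizer b y * ∫ z in Ioi 1, excessWeight G ε b z ∂m ≤
      y * ∫ z, compensatedIncrement (G ∘ truncation ε) y z ∂m := by
    rw [← integral_indicator measurableSet_Ioi, ← integral_const_mul, ← integral_const_mul,
      ← integral_const_mul, ← integral_const_mul, ← integral_add hmin hind]
    refine integral_mono_ae (hmin.add hind)
      ((hB.integrable_compensatedIncrement hε hφ hy).const_mul y) ?_
    filter_upwards [hφ.ae_pos] with z hz using hG.le_mul_compensatedIncrement hε hy hz hε1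
  have hlocal := (neg_le_neg (hG.abs_mul_local_generator_le (β := β) (σ := σ) hε hε1 hy)).trans
    (neg_abs_le _)
  rw [branchingGenerator, mul_add y]
  linear_combination hlocal + hjump

omit hφ
include hψ

lemma immigrationGenerator_le (hGn : IntegrableOn G (Ioi 1) ν) (hε : 0 < ε) {y : ℝ} (hy : 0 ≤ y) :
    immigrationGenerator h ν (G ∘ truncation ε) y ≤
      (h * D + D ^ 3 * (∫ z, min 1 z ∂ν + ∫ z in Ioi 1, G z ∂ν)) * (G ∘ truncation ε) y := by
  obtain ⟨B, hB⟩ := exists_hasExpDecay_comp_truncation hG.contDiff hε.le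
  have hind := hGn.integrable_indicator measurableSet_Ioi
  have hjump : ∫ z, ((G ∘ truncation ε) (y + z) - (G ∘ truncation ε) y) ∂ν ≤
      D ^ 3 * (G ∘ truncation ε) y * (∫ z, min 1 z ∂ν + ∫ z in Ioi 1, G z ∂ν) := by
    rw [← integral_indicator measurableSet_Ioi, ← integral_add hψ.integrable_min_one hind,
      ← integral_const_mul]
    refine integral_mono_ae (hB.integrable_increment hε hψ hy)
      ((hψ.integrable_min_one.add hind).const_mul _) ?_
    filter_upwards [hψ.ae_pos] with z hz using hG.comp_truncation_increment_le_add hε hy hz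
  have hdrift := mul_le_mul_of_nonneg_left (hG.deriv_comp_truncation_le hε hy) hψ.h_nonneg
  rw [immigrationGenerator]
  linear_combination hdrift + hjump

lemma le_immigrationGenerator (hε : 0 < ε) (b : ℝ) {y : ℝ} (hy : 0 ≤ y) :
    localizer b y * ∫ z in Ioi 1, excessWeight G ε b z ∂ν ≤
      immigrationGenerator h ν (G ∘ truncation ε) y := by
  obtain ⟨B, hB⟩ := exists_hasExpDecay_comp_truncation hG.contDiff hε.le
  have hind := ((hG.integrableOn_excessWeight hε b hψ.measure_Ioi_one_lt_top).integrable_indicator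
    measurableSet_Ioi).const_mul (localizer b y)
  have hjump : localizer b y * ∫ z in Ioi 1, excessWeight G ε b z ∂ν ≤
      ∫ z, ((G ∘ truncation ε) (y + z) - (G ∘ truncation ε) y) ∂ν := by
    rw [← integral_indicator measurableSet_Ioi, ← integral_const_mul]
    refine integral_mono_ae hind (hB.integrable_increment hε hψ hy) ?_
    filter_upwards [hψ.ae_pos] with z hz using hG.localizer_mul_indicator_le_increment hε hy hz
  have hdrift := mul_nonneg hψ.h_nonneg (hG.deriv_comp_truncation_nonneg hε y)
  rw [immigrationGenerator]
  linarith

include hφ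

lemma exists_cbiGenerator_le (hGm : IntegrableOn G (Ioi 1) m) (hGn : IntegrableOn G (Ioi 1) ν) :
    ∃ C, ∀ ε, 0 < ε → ε ≤ 1 → ∀ y, 0 ≤ y →
      cbiGenerator β σ h m ν (G ∘ truncation ε) y ≤ C * (G ∘ truncation ε) y :=
  ⟨_, fun _ hε hε1 _ hy ↦ (add_le_add (hG.mul_branchingGenerator_le hφ hGm hε hε1 hy)
    (hG.immigrationGenerator_le hψ hGn hε hy)).trans_eq (add_mul _ _ _).symm⟩

lemma exists_le_cbiGenerator : ∃ C, 0 ≤ C ∧ ∀ ε, 0 < ε → ε ≤ 1 → ∀ b y, 0 ≤ y →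
    localizer b y * ∫ z in Ioi 1, excessWeight G ε b z ∂(m + ν) ≤
      cbiGenerator β σ h m ν (G ∘ truncation ε) y + C * (G ∘ truncation ε) y := by
  have hD := hG.one_le_constant
  have : 0 ≤ ∫ z, min 1 (z ^ 2) ∂m := integral_nonneg fun z ↦ by positivity
  refine ⟨(|β| + σ ^ 2 / 2) * D + D ^ 3 * (2 * ∫ z, min 1 (z ^ 2) ∂m), by positivity,
    fun ε hε hε1 b y hy ↦ ?_⟩
  rw [Measure.restrict_add, integral_add_measure
    (hG.integrableOn_excessWeight hε b hφ.measure_Ioi_one_lt_top)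
    (hG.integrableOn_excessWeight hε b hψ.measure_Ioi_one_lt_top), cbiGenerator]
  linear_combination hG.le_mul_branchingGenerator hφ hε hε1 b hy +
    hG.le_immigrationGenerator hψ hε b hy

end Generator

end IsSmoothWeight

/-! ### Moment bounds -/

lemma ofReal_integral_le_lintegral {α : Type*} [MeasurableSpace α] {μ : Measure α} (F : α → ℝ) :
    ENNReal.ofReal (∫ a, F a ∂μ) ≤ ∫⁻ a, ENNReal.ofReal (F a) ∂μ := by
  by_cases hF : Integrable F μ
  · rw [integral_eq_lintegral_pos_part_sub_lintegral_neg_part hF]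
    exact (ENNReal.ofReal_le_ofReal (sub_le_self _ ENNReal.toReal_nonneg)).trans
      ENNReal.ofReal_toReal_le
  · simp [integral_undef hF]

lemma tendsto_truncation (y : ℝ) :
    Tendsto (fun n : ℕ ↦ truncation (1 / ((n : ℝ) + 1)) y) atTop (𝓝 y) := by
  have hexp : Tendsto (fun n : ℕ ↦ y * Real.exp (-(1 / ((n : ℝ) + 1) * y))) atTop (𝓝 y) := by
    simpa using ((tendsto_one_div_add_atTop_nhds_zero_nat.mul_const y).neg.rexp).const_mul y
  exact tendsto_of_tendsto_of_tendsto_of_le_of_le hexp tendsto_const_nhds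
    (fun n ↦ mul_exp_le_truncation Nat.one_div_pos_of_nat y)
    (fun n ↦ truncation_le_self Nat.one_div_pos_of_nat y)

lemma lintegral_le_of_forall_comp_truncation_le {F : ℝ → ℝ} (hF : Continuous F) {q : Measure ℝ}
    {B : ENNReal} (hB : ∀ ε, 0 < ε → ε ≤ 1 →
      ∫⁻ y, ENNReal.ofReal ((F ∘ truncation ε) y) ∂q ≤ B) :
    ∫⁻ y, ENNReal.ofReal (F y) ∂q ≤ B := by
  have hlim (y : ℝ) : Tendsto (fun n : ℕ ↦ ENNReal.ofReal ((F ∘ truncation (1 / ((n : ℝ) + 1))) y))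
      atTop (𝓝 (ENNReal.ofReal (F y))) :=
    ENNReal.tendsto_ofReal ((hF.tendsto y).comp (tendsto_truncation y))
  simp only [← fun y ↦ (hlim y).liminf_eq]
  refine (lintegral_liminf_le fun n ↦ by fun_prop).trans (liminf_le_of_frequently_le'
    (Frequently.of_forall fun n ↦ hB _ Nat.one_div_pos_of_nat ?_))
  exact (div_le_one (by positivity)).2 (by linarith [(n.cast_nonneg : (0 : ℝ) ≤ n)])

namespace ForwardEquation

variable {q : ℝ → Measure ℝ} {x : ℝ} {F A : ℝ → ℝ}

lemma integral_le_mul_exp (hF : ForwardEquation q x F A) (hq0 : ∀ t, 0 ≤ t → q t (Iio 0) = 0)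
    {C : ℝ} (hA : ∀ y, 0 ≤ y → A y ≤ C * F y) {t : ℝ} (ht : 0 ≤ t) :
    ∫ y, F y ∂q t ≤ F x * Real.exp (C * t) := by
  have h := le_mul_exp_of_deriv_right_le ht (hF.continuousOn_integral.mono Icc_subset_Ici_self)
    (fun s hs ↦ hF.hasDerivWithinAt hs.1) fun s hs ↦ by
      rw [← integral_const_mul]
      exact integral_mono_ae (hF.integrable_gen s hs.1) ((hF.integrable s hs.1).const_mul C)
        ((ae_nonneg_of_measure_Iio (hq0 s hs.1)).mono hA)
  rwa [hF.integral_zero, sub_zero] at h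

lemma mul_le_exp_mul_integral (hF : ForwardEquation q x F A) (hFx : 0 ≤ F x) {C κ s t : ℝ}
    (hC : 0 ≤ C) (hs : s ∈ Icc 0 t)
    (hnonneg : ∀ r, 0 ≤ r → 0 ≤ (∫ y, A y ∂q r) + C * ∫ y, F y ∂q r)
    (hκ : ∀ r ∈ Ico 0 s, κ ≤ (∫ y, A y ∂q r) + C * ∫ y, F y ∂q r) :
    κ * s ≤ Real.exp (C * t) * ∫ y, F y ∂q t := by
  have hcont := hF.continuousOn_exp_mul C
  have hint {r : ℝ} (hr : 0 ≤ r) :=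
    (hcont.mono Icc_subset_Ici_self).intervalIntegrable_of_Icc (μ := volume) hr
  calc κ * s = ∫ _ in (0 : ℝ)..s, κ := by simp [mul_comm]
    _ ≤ ∫ r in (0 : ℝ)..s, Real.exp (C * r) * ((∫ y, A y ∂q r) + C * ∫ y, F y ∂q r) := by
      refine intervalIntegral.integral_mono_on_of_le_Ioo hs.1 (by simp) (hint hs.1) fun r hr ↦ ?_
      have hκr := hκ r (Ioo_subset_Ico_self hr)
      exact hκr.trans (le_mul_of_one_le_left (hnonneg r hr.1.le)
        (Real.one_le_exp (mul_nonneg hC hr.1.le)))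
    _ ≤ ∫ r in (0 : ℝ)..t, Real.exp (C * r) * ((∫ y, A y ∂q r) + C * ∫ y, F y ∂q r) := by
      refine intervalIntegral.integral_mono_interval le_rfl hs.1 hs.2 ?_ (hint (hs.1.trans hs.2))
      exact (ae_restrict_mem measurableSet_Ioc).mono fun r hr ↦
        mul_nonneg (Real.exp_pos _).le (hnonneg r hr.1.le)
    _ ≤ _ := by
      rw [hF.exp_mul_integral_eq C (hs.1.trans hs.2)]
      exact le_add_of_nonneg_left hFx

end ForwardEquation

section Localizer

variable {φ ψ : ℝ → ℝ} {β σ h : ℝ} {m ν : Measure ℝ} {v : ℝ → ℝ → ℝ} {Q : ℝ → ℝ → Measure ℝ}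
  (hφ : IsBranchingMechanism φ β σ m) (hψ : IsImmigrationMechanism ψ h ν)
  (hv : IsCumulant φ v) (hQ : IsCBISemigroup v ψ Q)

include hφ hψ hv hQ

lemma forwardEquation_localizer {x : ℝ} (hx : 0 ≤ x) (b : ℝ) :
    ForwardEquation (Q · x) x (localizer b) (cbiGenerator β σ h m ν (localizer b)) := by
  have hlift : localizer b = expLift (fun u ↦ (1 - u) * (u - Real.exp (-b))) 1 := by
    funext y
    simp [localizer, expLift]
  rw [hlift]
  exact forwardEquation_expLift hφ hψ hv hQ hx one_pos (by fun_prop)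

lemma exists_forall_le_integral_localizer {b x : ℝ} (hx : 0 < x) (hxb : x < b) {t : ℝ}
    (ht : 0 < t) : ∃ κ, 0 < κ ∧ ∃ s ∈ Ioc 0 t, ∀ r ∈ Ico 0 s, κ ≤ ∫ y, localizer b y ∂Q r x := by
  have hF := forwardEquation_localizer hφ hψ hv hQ hx.le b
  have hpos := localizer_pos hx hxb
  have hev : ∀ᶠ r in 𝓝[≥] 0, localizer b x / 2 ≤ ∫ y, localizer b y ∂Q r x := by
    refine (hF.continuousOn_integral 0 self_mem_Ici).eventually_const_le ?_
    exact (half_lt_self hpos).trans_eq hF.integral_zero.symm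
  obtain ⟨s, hs, hsub⟩ := (mem_nhdsGE_iff_exists_mem_Ioc_Ico_subset ht).1 hev
  exact ⟨_, half_pos hpos, s, hs, hsub⟩

end Localizer

namespace IsSmoothWeight

variable {G : ℝ → ℝ} {D : ℝ} (hG : IsSmoothWeight G D)

include hG

lemma lintegral_lt_top_of_excessWeight {b : ℝ} {ρ : Measure ℝ} {B : ℝ} (hρ : ρ (Ioi 1) < ⊤)
    (hB : ∀ ε, 0 < ε → ε ≤ 1 → ∫ z in Ioi 1, excessWeight G ε b z ∂ρ ≤ B) :
    ∫⁻ z in Ioi 1, ENNReal.ofReal (G z) ∂ρ < ⊤ := by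
  have hcont := hG.contDiff.continuous
  have hexcess : ∫⁻ z in Ioi 1, ENNReal.ofReal (max (G z - G b) 0) ∂ρ ≤ ENNReal.ofReal B := by
    refine lintegral_le_of_forall_comp_truncation_le (F := fun z ↦ max (G z - G b) 0)
      (by fun_prop) fun ε hε hε1 ↦ ?_
    exact (ofReal_integral_eq_lintegral_ofReal (hG.integrableOn_excessWeight hε b hρ)
      (.of_forall (excessWeight_nonneg G ε b))).symm.trans_le
        (ENNReal.ofReal_le_ofReal (hB ε hε hε1))
  calc ∫⁻ z in Ioi 1, ENNReal.ofReal (G z) ∂ρ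
      ≤ ∫⁻ z in Ioi 1, (ENNReal.ofReal (max (G z - G b) 0) + ENNReal.ofReal (G b)) ∂ρ := by
        refine lintegral_mono fun z ↦ ?_
        rw [← ENNReal.ofReal_add (le_max_right _ _) (hG.pos b).le]
        exact ENNReal.ofReal_le_ofReal (by linarith [le_max_left (G z - G b) 0])
    _ = (∫⁻ z in Ioi 1, ENNReal.ofReal (max (G z - G b) 0) ∂ρ) +
          ENNReal.ofReal (G b) * ρ (Ioi 1) := by
        rw [lintegral_add_right _ measurable_const, setLIntegral_const]
    _ < ⊤ := ENNReal.add_lt_top.2 ⟨hexcess.trans_lt ENNReal.ofReal_lt_top,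
        ENNReal.mul_lt_top ENNReal.ofReal_lt_top hρ⟩

lemma le_pow_mul {y : ℝ} (hy : 0 ≤ y) (k : ℕ) : G (2 ^ k * y) ≤ D ^ k * G y := by
  have hD := hG.one_le_constant
  induction k with
  | zero => simp
  | succ k ih =>
    calc G (2 ^ (k + 1) * y) ≤ D * G (2 ^ k * y) :=
          hG.le_mul_of_le_two_mul_add_two (by positivity) (by rw [pow_succ]; linarith)
      _ ≤ D * (D ^ k * G y) := by gcongr
      _ = D ^ (k + 1) * G y := by ring

lemma exists_comp_mul_le (a : ℝ) : ∃ K, 0 ≤ K ∧ ∀ y, 0 ≤ y → G (a * y) ≤ K * G y := by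
  obtain ⟨k, hk⟩ := pow_unbounded_of_one_lt a one_lt_two
  have := hG.one_le_constant
  refine ⟨D ^ k, by positivity, fun y hy ↦ (hG.monotone ?_).trans (hG.le_pow_mul hy k)⟩
  gcongr

lemma mul_one_sub_laplace_le {q : Measure ℝ} [IsProbabilityMeasure q] (hq0 : q (Iio 0) = 0)
    (r : ℝ) : ENNReal.ofReal (G r * (1 - Real.exp r * ∫ y, Real.exp (-(1 * y)) ∂q)) ≤
      ∫⁻ y, ENNReal.ofReal (G y) ∂q := by
  have hpt (y : ℝ) : G r * (1 - Real.exp r * Real.exp (-(1 * y))) ≤ G y := by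
    rw [← Real.exp_add]
    rcases le_total r y with hry | hyr
    · exact (mul_le_of_le_one_right (hG.pos r).le (by linarith [Real.exp_pos (r + -(1 * y))])).trans
        (hG.monotone hry)
    · refine (mul_nonpos_of_nonneg_of_nonpos (hG.pos r).le ?_).trans (hG.pos y).le
      linarith [Real.one_le_exp (by linarith : 0 ≤ r + -(1 * y))]
  calc ENNReal.ofReal (G r * (1 - Real.exp r * ∫ y, Real.exp (-(1 * y)) ∂q))
      = ENNReal.ofReal (∫ y, G r * (1 - Real.exp r * Real.exp (-(1 * y))) ∂q) := by
        rw [integral_const_mul, integral_sub (integrable_const 1)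
          ((integrable_exp_neg_mul hq0 zero_le_one).const_mul _), integral_const_mul]
        simp
    _ ≤ ∫⁻ y, ENNReal.ofReal (G r * (1 - Real.exp r * Real.exp (-(1 * y)))) ∂q :=
        ofReal_integral_le_lintegral _
    _ ≤ ∫⁻ y, ENNReal.ofReal (G y) ∂q :=
        lintegral_mono fun y ↦ ENNReal.ofReal_le_ofReal (hpt y)

variable {φ ψ : ℝ → ℝ} {β σ h : ℝ} {m ν : Measure ℝ} {v : ℝ → ℝ → ℝ} {Q : ℝ → ℝ → Measure ℝ}
  (hφ : IsBranchingMechanism φ β σ m) (hψ : IsImmigrationMechanism ψ h ν)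
  (hv : IsCumulant φ v) (hQ : IsCBISemigroup v ψ Q)

include hφ hψ hv hQ

lemma forwardEquation_comp_truncation {x ε : ℝ} (hx : 0 ≤ x) (hε : 0 < ε) :
    ForwardEquation (Q · x) x (G ∘ truncation ε) (cbiGenerator β σ h m ν (G ∘ truncation ε)) := by
  rw [comp_truncation_eq_expLift]
  exact forwardEquation_expLift hφ hψ hv hQ hx hε
    (hG.contDiff.comp ((contDiff_const.sub contDiff_id).div_const ε))

lemma exists_lintegral_le (hGm : IntegrableOn G (Ioi 1) m) (hGn : IntegrableOn G (Ioi 1) ν)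
    {t : ℝ} (ht : 0 ≤ t) : ∃ K : ENNReal, K ≠ ⊤ ∧ ∀ x, 0 ≤ x →
      ∫⁻ y, ENNReal.ofReal (G y) ∂Q t x ≤ K * ENNReal.ofReal (G x) := by
  obtain ⟨C, hC⟩ := hG.exists_cbiGenerator_le hφ hψ hGm hGn
  refine ⟨ENNReal.ofReal (Real.exp (C * t)), ENNReal.ofReal_ne_top, fun x hx ↦ ?_⟩
  refine lintegral_le_of_forall_comp_truncation_le hG.contDiff.continuous fun ε hε hε1 ↦ ?_
  have hF := hG.forwardEquation_comp_truncation hφ hψ hv hQ hx hε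
  rw [← ofReal_integral_eq_lintegral_ofReal (hF.integrable t ht) (.of_forall fun y ↦ (hG.pos _).le),
    ← ENNReal.ofReal_mul (Real.exp_pos _).le]
  refine ENNReal.ofReal_le_ofReal ?_
  calc ∫ y, (G ∘ truncation ε) y ∂Q t x ≤ G (truncation ε x) * Real.exp (C * t) :=
        hF.integral_le_mul_exp (fun s hs ↦ (hQ s x hs hx).2.1) (hC ε hε hε1) ht
    _ ≤ Real.exp (C * t) * G x := by
        rw [mul_comm]
        gcongr
        exact hG.monotone (truncation_le_self hε x)

omit hψ in
lemma exists_le_mul_lintegral {t : ℝ} (ht : 0 ≤ t) : ∃ K : ENNReal, K ≠ ⊤ ∧ ∃ x₀, ∀ x, x₀ ≤ x →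
    ENNReal.ofReal (G x) ≤ K * ∫⁻ y, ENNReal.ofReal (G y) ∂Q t x := by
  set w := v t 1
  set M := Real.exp (-∫ s in (0 : ℝ)..t, ψ (v s 1))
  have hw : 0 < w :=
    (hv.isCumulantPath zero_le_one).pos hφ.convexOn hφ.continuousOn hφ.map_zero one_pos ht
  obtain ⟨K, hK0, hK⟩ := hG.exists_comp_mul_le (2 / w)
  refine ⟨ENNReal.ofReal (2 * K), ENNReal.ofReal_ne_top, 4 * M / w, fun x hx ↦ ?_⟩
  have hx0 : 0 ≤ x := le_trans (by positivity) hx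
  obtain ⟨_, hq0, hlap⟩ := hQ t x ht hx0
  obtain ⟨r, rfl⟩ : ∃ r, x = 2 / w * r := ⟨w / 2 * x, by field_simp⟩
  have hr : 2 * M ≤ r := by
    have h := (div_le_iff₀ hw).1 hx
    field_simp at h
    linarith
  have hr0 : 0 ≤ r := le_trans (by positivity) hr
  have hhalf : Real.exp r * ∫ y, Real.exp (-(1 * y)) ∂Q t (2 / w * r) ≤ 1 / 2 := by
    have hexp : Real.exp r * ∫ y, Real.exp (-(1 * y)) ∂Q t (2 / w * r) = M * Real.exp (-r) := by
      rw [hlap 1 zero_le_one, ← Real.exp_add, ← Real.exp_add]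
      congr 1
      field_simp
      ring
    rw [hexp, Real.exp_neg, ← div_eq_mul_inv, div_le_iff₀ (Real.exp_pos r)]
    linarith [Real.add_one_le_exp r]
  calc ENNReal.ofReal (G (2 / w * r)) ≤ ENNReal.ofReal (2 * K * (G r *
          (1 - Real.exp r * ∫ y, Real.exp (-(1 * y)) ∂Q t (2 / w * r)))) := by
        refine ENNReal.ofReal_le_ofReal ((hK r hr0).trans ?_)
        nlinarith [mul_nonneg hK0 (hG.pos r).le]
    _ ≤ _ := by
      rw [ENNReal.ofReal_mul (by positivity)]
      gcongr
      exact hG.mul_one_sub_laplace_le hq0 r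

lemma exists_mul_integral_excessWeight_le {x : ℝ} (hx : 0 ≤ x) (t : ℝ) :
    ∃ K, 0 ≤ K ∧ ∀ ε, 0 < ε → ε ≤ 1 → ∀ b κ s, s ∈ Icc 0 t →
      (∀ r ∈ Ico 0 s, κ ≤ ∫ y, localizer b y ∂Q r x) →
      κ * (∫ z in Ioi 1, excessWeight G ε b z ∂(m + ν)) * s ≤
        K * ∫ y, (G ∘ truncation ε) y ∂Q t x := by
  obtain ⟨C, hC0, hC⟩ := hG.exists_le_cbiGenerator hφ hψ
  refine ⟨Real.exp (C * t), (Real.exp_pos _).le, fun ε hε hε1 b κ s hs hκ ↦ ?_⟩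
  have hF := hG.forwardEquation_comp_truncation hφ hψ hv hQ hx hε
  have hdrift {L : ℝ → ℝ} {r : ℝ} (hr : 0 ≤ r) (hL : Integrable L (Q r x)) (hle : ∀ y, 0 ≤ y →
      L y ≤ cbiGenerator β σ h m ν (G ∘ truncation ε) y + C * (G ∘ truncation ε) y) :
      ∫ y, L y ∂Q r x ≤ (∫ y, cbiGenerator β σ h m ν (G ∘ truncation ε) y ∂Q r x) +
        C * ∫ y, (G ∘ truncation ε) y ∂Q r x := by
    have hFr := (hF.integrable r hr).const_mul C
    rw [← integral_const_mul, ← integral_add (hF.integrable_gen r hr) hFr]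
    exact integral_mono_ae hL ((hF.integrable_gen r hr).add hFr)
      ((ae_nonneg_of_measure_Iio (hQ r x hr hx).2.1).mono hle)
  refine hF.mul_le_exp_mul_integral (hG.pos _).le hC0 hs (fun r hr ↦ ?_) fun r hr ↦ ?_
  · -- The lower bound with `b = y`, where the localizer vanishes, bounds the drift below by `0`.
    exact (integral_zero ℝ ℝ).symm.trans_le (hdrift hr (integrable_zero _ _ _) fun y hy ↦ by
      simpa [localizer_self] using hC ε hε hε1 y y hy)
  · refine (mul_le_mul_of_nonneg_right (hκ r hr)
      (integral_nonneg (excessWeight_nonneg G ε b))).trans ?_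
    rw [← integral_mul_const]
    have hloc := (forwardEquation_localizer hφ hψ hv hQ hx b).integrable r hr.1
    exact hdrift hr.1 (hloc.mul_const _) (hC ε hε hε1 b)

lemma lintegral_levy_lt_top {x t : ℝ} (hx : 0 < x) (ht : 0 < t)
    (hfin : ∫⁻ y, ENNReal.ofReal (G y) ∂Q t x < ⊤) :
    ∫⁻ z in Ioi 1, ENNReal.ofReal (G z) ∂(m + ν) < ⊤ := by
  obtain ⟨K, hK0, hK⟩ := hG.exists_mul_integral_excessWeight_le hφ hψ hv hQ hx.le t
  obtain ⟨κ, hκ, s, hs, hκs⟩ :=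
    exists_forall_le_integral_localizer hφ hψ hv hQ hx (lt_add_one x) ht
  have hρ : (m + ν) (Ioi 1) < ⊤ :=
    ENNReal.add_lt_top.2 ⟨hφ.measure_Ioi_one_lt_top, hψ.measure_Ioi_one_lt_top⟩
  refine hG.lintegral_lt_top_of_excessWeight (b := x + 1)
    (B := K * (∫⁻ y, ENNReal.ofReal (G y) ∂Q t x).toReal / (κ * s)) hρ fun ε hε hε1 ↦ ?_
  have hle : ∫ y, (G ∘ truncation ε) y ∂Q t x ≤ (∫⁻ y, ENNReal.ofReal (G y) ∂Q t x).toReal :=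
    (ENNReal.ofReal_le_iff_le_toReal hfin.ne).1 ((ofReal_integral_le_lintegral _).trans
      (lintegral_mono fun y ↦ ENNReal.ofReal_le_ofReal (hG.monotone (truncation_le_self hε y))))
  rw [le_div_iff₀ (mul_pos hκ hs.1)]
  calc (∫ z in Ioi 1, excessWeight G ε (x + 1) z ∂(m + ν)) * (κ * s)
      = κ * (∫ z in Ioi 1, excessWeight G ε (x + 1) z ∂(m + ν)) * s := by ring
    _ ≤ K * ∫ y, (G ∘ truncation ε) y ∂Q t x :=
      hK ε hε hε1 _ κ s (Ioc_subset_Icc_self hs) hκs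
    _ ≤ _ := by gcongr

end IsSmoothWeight

/-! ### The moment criterion -/

lemma exists_lintegral_le_of_isBigO {f g : ℝ → ℝ} (hg : ∀ x, 0 ≤ x → 0 ≤ g x)
    (hfg : f =O[𝓟 (Ici 0)] g) : ∃ K : ENNReal, K ≠ ⊤ ∧ ∀ ρ : Measure ℝ, ρ (Iio 0) = 0 →
      ∫⁻ x, ENNReal.ofReal (f x) ∂ρ ≤ K * ∫⁻ x, ENNReal.ofReal (g x) ∂ρ := by
  obtain ⟨K, hK0, hK⟩ := hfg.exists_nonneg
  refine ⟨ENNReal.ofReal K, ENNReal.ofReal_ne_top, fun ρ hρ ↦ ?_⟩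
  rw [← lintegral_const_mul' _ _ ENNReal.ofReal_ne_top]
  refine lintegral_mono_ae ((ae_nonneg_of_measure_Iio hρ).mono fun x hx ↦ ?_)
  rw [← ENNReal.ofReal_mul hK0]
  have h := isBigOWith_principal.1 hK x hx
  rw [Real.norm_of_nonneg (hg x hx)] at h
  exact ENNReal.ofReal_le_ofReal ((le_abs_self _).trans h)

lemma lintegral_lt_top_of_isBigO {f g : ℝ → ℝ} (hg : ∀ x, 0 ≤ x → 0 ≤ g x)
    (hfg : f =O[𝓟 (Ici 0)] g) {ρ : Measure ℝ} (hρ : ρ (Iio 0) = 0)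
    (hfin : ∫⁻ x, ENNReal.ofReal (g x) ∂ρ < ⊤) : ∫⁻ x, ENNReal.ofReal (f x) ∂ρ < ⊤ := by
  obtain ⟨K, hK, hle⟩ := exists_lintegral_le_of_isBigO hg hfg
  exact (hle ρ hρ).trans_lt (ENNReal.mul_lt_top hK.lt_top hfin)

lemma lintegral_lintegral_lt_top_of_isBigO {f g : ℝ → ℝ} (hg : ∀ x, 0 ≤ x → 0 ≤ g x)
    (hfg : f =O[𝓟 (Ici 0)] g) {q : ℝ → Measure ℝ} (hq : ∀ x, 0 ≤ x → q x (Iio 0) = 0)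
    {μ : Measure ℝ} (hμ : μ (Iio 0) = 0)
    (hfin : ∫⁻ x, ∫⁻ y, ENNReal.ofReal (g y) ∂q x ∂μ < ⊤) :
    ∫⁻ x, ∫⁻ y, ENNReal.ofReal (f y) ∂q x ∂μ < ⊤ := by
  obtain ⟨K, hK, hle⟩ := exists_lintegral_le_of_isBigO hg hfg
  refine (lintegral_mono_ae (g := fun x ↦ K * ∫⁻ y, ENNReal.ofReal (g y) ∂q x) ?_).trans_lt ?_
  · filter_upwards [ae_nonneg_of_measure_Iio hμ] with x hx using hle _ (hq x hx)
  · rw [lintegral_const_mul' _ _ hK]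
    exact ENNReal.mul_lt_top hK.lt_top hfin

lemma lintegral_lt_top_congr_of_isTheta {f g : ℝ → ℝ} (hf : ∀ x, 0 ≤ x → 0 ≤ f x)
    (hg : ∀ x, 0 ≤ x → 0 ≤ g x) (hfg : f =Θ[𝓟 (Ici 0)] g) {ρ : Measure ℝ} (hρ : ρ (Iio 0) = 0) :
    ∫⁻ x, ENNReal.ofReal (f x) ∂ρ < ⊤ ↔ ∫⁻ x, ENNReal.ofReal (g x) ∂ρ < ⊤ :=
  ⟨lintegral_lt_top_of_isBigO hf hfg.2 hρ, lintegral_lt_top_of_isBigO hg hfg.1 hρ⟩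

lemma lintegral_lintegral_lt_top_congr_of_isTheta {f g : ℝ → ℝ} (hf : ∀ x, 0 ≤ x → 0 ≤ f x)
    (hg : ∀ x, 0 ≤ x → 0 ≤ g x) (hfg : f =Θ[𝓟 (Ici 0)] g) {q : ℝ → Measure ℝ}
    (hq : ∀ x, 0 ≤ x → q x (Iio 0) = 0) {μ : Measure ℝ} (hμ : μ (Iio 0) = 0) :
    ∫⁻ x, ∫⁻ y, ENNReal.ofReal (f y) ∂q x ∂μ < ⊤ ↔
      ∫⁻ x, ∫⁻ y, ENNReal.ofReal (g y) ∂q x ∂μ < ⊤ :=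
  ⟨lintegral_lintegral_lt_top_of_isBigO hf hfg.2 hq hμ,
    lintegral_lintegral_lt_top_of_isBigO hg hfg.1 hq hμ⟩

lemma lintegral_lt_top_of_isBigO_one {f : ℝ → ℝ} (hf : f =O[𝓟 (Ici 0)] fun _ ↦ (1 : ℝ))
    {ρ : Measure ℝ} (hρ : ρ (Iio 0) = 0) (hfin : ρ univ < ⊤) :
    ∫⁻ x, ENNReal.ofReal (f x) ∂ρ < ⊤ :=
  lintegral_lt_top_of_isBigO (fun _ _ ↦ zero_le_one) hf hρ (by simpa using hfin)

lemma lintegral_lintegral_lt_top_of_isBigO_one {f : ℝ → ℝ}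
    (hf : f =O[𝓟 (Ici 0)] fun _ ↦ (1 : ℝ)) {q : ℝ → Measure ℝ}
    (hprob : ∀ x, 0 ≤ x → IsProbabilityMeasure (q x)) (hq : ∀ x, 0 ≤ x → q x (Iio 0) = 0)
    {μ : Measure ℝ} [IsFiniteMeasure μ] (hμ : μ (Iio 0) = 0) :
    ∫⁻ x, ∫⁻ y, ENNReal.ofReal (f y) ∂q x ∂μ < ⊤ := by
  refine lintegral_lintegral_lt_top_of_isBigO (fun _ _ ↦ zero_le_one) hf hq hμ ?_
  have hmass : ∀ᵐ x ∂μ, ∫⁻ _, ENNReal.ofReal 1 ∂q x = 1 := by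
    filter_upwards [ae_nonneg_of_measure_Iio hμ] with x hx
    have := hprob x hx
    simp
  rw [lintegral_congr_ae hmass, lintegral_one]
  exact measure_lt_top μ univ

-- No measurability of `F` is assumed, so `ae_lt_top` does not apply.
lemma exists_mem_lt_top_of_lintegral_lt_top {α : Type*} [MeasurableSpace α] {μ : Measure α}
    {F : α → ENNReal} {s : Set α} (hs : MeasurableSet s) (hμs : μ s ≠ 0)
    (hF : ∫⁻ x, F x ∂μ < ⊤) : ∃ x ∈ s, F x < ⊤ := by
  by_contra! htop
  refine hF.not_ge (le_trans ?_ (setLIntegral_le_lintegral s F))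
  calc ⊤ = ∫⁻ _ in s, ⊤ ∂μ := by rw [setLIntegral_const, ENNReal.top_mul hμs]
    _ ≤ ∫⁻ x in s, F x ∂μ := setLIntegral_mono' hs htop

namespace IsSmoothWeight

variable {G : ℝ → ℝ} {D : ℝ} {φ ψ : ℝ → ℝ} {β σ h : ℝ} {m ν μ : Measure ℝ} [IsFiniteMeasure μ]
  {v : ℝ → ℝ → ℝ} {Q : ℝ → ℝ → Measure ℝ} {t : ℝ}
  (hG : IsSmoothWeight G D) (hφ : IsBranchingMechanism φ β σ m)
  (hv : IsCumulant φ v) (hQ : IsCBISemigroup v ψ Q)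

include hG hφ hv hQ

lemma lintegral_initial_lt_top (ht : 0 ≤ t)
    (hfin : ∫⁻ x, ∫⁻ y, ENNReal.ofReal (G y) ∂Q t x ∂μ < ⊤) :
    ∫⁻ x, ENNReal.ofReal (G x) ∂μ < ⊤ := by
  obtain ⟨K, hK, x₀, hle⟩ := hG.exists_le_mul_lintegral hφ hv hQ ht
  calc ∫⁻ x, ENNReal.ofReal (G x) ∂μ
      ≤ ∫⁻ x, (K * (∫⁻ y, ENNReal.ofReal (G y) ∂Q t x) + ENNReal.ofReal (G x₀)) ∂μ := by
        refine lintegral_mono fun x ↦ ?_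
        rcases le_total x₀ x with hx | hx
        · exact (hle x hx).trans le_self_add
        · exact (ENNReal.ofReal_le_ofReal (hG.monotone hx)).trans le_add_self
    _ = K * (∫⁻ x, ∫⁻ y, ENNReal.ofReal (G y) ∂Q t x ∂μ) + ENNReal.ofReal (G x₀) * μ univ := by
        rw [lintegral_add_right _ measurable_const, lintegral_const_mul' _ _ hK, lintegral_const]
    _ < ⊤ := ENNReal.add_lt_top.2 ⟨ENNReal.mul_lt_top hK.lt_top hfin,
        ENNReal.mul_lt_top ENNReal.ofReal_lt_top (measure_lt_top μ univ)⟩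

theorem lintegral_lintegral_lt_top_iff (hψ : IsImmigrationMechanism ψ h ν)
    (hμ0 : μ (Iio 0) = 0) (hμpos : 0 < μ (Ioi 0)) (ht : 0 < t) :
    ∫⁻ x, ∫⁻ y, ENNReal.ofReal (G y) ∂Q t x ∂μ < ⊤ ↔
      ∫⁻ z in Ioi 1, ENNReal.ofReal (G z) ∂(m + ν) < ⊤ ∧ ∫⁻ x, ENNReal.ofReal (G x) ∂μ < ⊤ := by
  refine ⟨fun hfin ↦ ⟨?_, hG.lintegral_initial_lt_top hφ hv hQ ht.le hfin⟩, fun ⟨hlevy, hinit⟩ ↦ ?_⟩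
  · obtain ⟨x, hx, hxfin⟩ :=
      exists_mem_lt_top_of_lintegral_lt_top measurableSet_Ioi hμpos.ne' hfin
    exact hG.lintegral_levy_lt_top hφ hψ hv hQ hx ht hxfin
  · have hint : IntegrableOn G (Ioi 1) (m + ν) := (lintegral_ofReal_ne_top_iff_integrable
      hG.contDiff.continuous.aestronglyMeasurable (.of_forall fun z ↦ (hG.pos z).le)).1 hlevy.ne
    obtain ⟨hm, hn⟩ := integrableOn_add_measure.1 hint
    obtain ⟨K, hK, hle⟩ := hG.exists_lintegral_le hφ hψ hv hQ hm hn ht.le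
    calc ∫⁻ x, ∫⁻ y, ENNReal.ofReal (G y) ∂Q t x ∂μ ≤ ∫⁻ x, K * ENNReal.ofReal (G x) ∂μ :=
          lintegral_mono_ae ((ae_nonneg_of_measure_Iio hμ0).mono hle)
      _ = K * ∫⁻ x, ENNReal.ofReal (G x) ∂μ := lintegral_const_mul' _ _ hK
      _ < ⊤ := ENNReal.mul_lt_top hK.lt_top hinit

end IsSmoothWeight

/-- Theorem 2.2: for a CBI-process with branching mechanism `φ` (Lévy measure
`m`) satisfying Grey's condition, immigration mechanism `ψ` (immigration
measure `ν`) and initial law `μ` with `μ((0,∞)) > 0`, for every `t > 0` the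
`f`-moment at time `t` is finite iff `∫_{(1,∞)} f(z) (m+ν)(dz) < ∞` and the
`f`-moment of `μ` is finite. -/
theorem cbi_f_moment_criterion
    (f : ℝ → ℝ) (hf : ConditionA f)
    (φ : ℝ → ℝ) (β σ : ℝ) (m : Measure ℝ)
    (hφ : IsBranchingMechanism φ β σ m) (hGrey : GreyCondition φ)
    (ψ : ℝ → ℝ) (h : ℝ) (ν : Measure ℝ)
    (hψ : IsImmigrationMechanism ψ h ν)
    (v : ℝ → ℝ → ℝ) (hv : IsCumulant φ v)
    (Qγ : ℝ → ℝ → Measure ℝ) (hQγ : IsCBISemigroup v ψ Qγ)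
    (μ : Measure ℝ) (hμ : IsProbabilityMeasure μ)
    (hμ0 : μ (Set.Iio 0) = 0) (hμpos : 0 < μ (Set.Ioi 0))
    (t : ℝ) (ht : 0 < t) :
    (∫⁻ x, (∫⁻ y, ENNReal.ofReal (f y) ∂(Qγ t x)) ∂μ) < ⊤ ↔
      ((∫⁻ z in Set.Ioi 1, ENNReal.ofReal (f z) ∂(m + ν)) < ⊤ ∧
        (∫⁻ x, ENNReal.ofReal (f x) ∂μ) < ⊤) := by
  have hprob (x : ℝ) (hx : 0 ≤ x) : IsProbabilityMeasure (Qγ t x) := (hQγ t x ht.le hx).1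
  have hQ0 (x : ℝ) (hx : 0 ≤ x) : Qγ t x (Iio 0) = 0 := (hQγ t x ht.le hx).2.1
  have hlevy0 : (m + ν).restrict (Ioi 1) (Iio 0) = 0 := by
    rw [Measure.restrict_apply measurableSet_Iio, Iio_inter_Ioi, Ioo_eq_empty (by norm_num),
      measure_empty]
  rcases hf.isBigO_one_or_exists_isSmoothWeight with hbdd | ⟨G, D, hG, hfG⟩
  · refine iff_of_true (lintegral_lintegral_lt_top_of_isBigO_one hbdd hprob hQ0 hμ0)
      ⟨lintegral_lt_top_of_isBigO_one hbdd hlevy0 ?_,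
        lintegral_lt_top_of_isBigO_one hbdd hμ0 (measure_lt_top μ univ)⟩
    rw [Measure.restrict_apply_univ]
    exact ENNReal.add_lt_top.2 ⟨hφ.measure_Ioi_one_lt_top, hψ.measure_Ioi_one_lt_top⟩
  · have hf0 (x : ℝ) (hx : 0 ≤ x) : 0 ≤ f x := (hf.2.1 x hx).le
    have hG0 (x : ℝ) (_ : 0 ≤ x) : 0 ≤ G x := (hG.pos x).le
    rw [lintegral_lintegral_lt_top_congr_of_isTheta hf0 hG0 hfG hQ0 hμ0,
      lintegral_lt_top_congr_of_isTheta hf0 hG0 hfG hlevy0,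
      lintegral_lt_top_congr_of_isTheta hf0 hG0 hfG hμ0]
    exact hG.lintegral_lintegral_lt_top_iff hφ hv hQγ hψ hμ0 hμpos ht
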